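/- arXiv:2507.06142 — 8 statements merged into one kernel-verified Lean document; each statement's English description precedes it below -/
import Mathlib

section
/- Let α₋ < 0 < α₊ be real numbers and let f : ℝ → ℂ be Lebesgue integrable. Suppose there exist constants C > 0 and R > 0 such that |𝓕[f](ξ)| ≤ C·e^{2π α₊ ξ} for all ξ ≤ −R and |𝓕[f](ξ)| ≤ C·e^{2π α₋ ξ} for all ξ ≥ R. Then there exists a function F : ℂ → ℂ that is holomorphic on the open horizontal strip {z ∈ ℂ : α₋ < Im z < α₊} and satisfies F(t) = f(t) for almost every t ∈ ℝ. -/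
open MeasureTheory FourierTransform Filter Real

/-!
Extend `f` by the inverse Fourier integral `F z = ∫ exp (2πiξz) 𝓕f(ξ) dξ`, which on the real line
is `𝓕⁻ (𝓕 f)` and hence equals `f` almost everywhere. The substitution `x = exp (-ξ)` turns `F z`
into the Mellin transform of `x ↦ 𝓕f(-log x)` at `-2πiz`. Exponential decay of `𝓕f` at `±∞` becomes
power decay at `0` and `∞`, and the strip of holomorphy of this Mellin transform is
`2πα₋ < Re (-2πiz) < 2πα₊`, that is, `α₋ < Im z < α₊`.
-/

section FourierInversion

variable {V E : Type*} [NormedAddCommGroup V] [InnerProductSpace ℝ V] [MeasurableSpace V]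
  [BorelSpace V] [FiniteDimensional ℝ V] [NormedAddCommGroup E] [NormedSpace ℂ E]

lemma continuous_fourier_of_integrable {f : V → E} (hf : Integrable f) : Continuous (𝓕 f) :=
  VectorFourier.fourierIntegral_continuous (L := innerₗ V) continuous_fourierChar continuous_inner
    hf

lemma continuous_fourierInv_of_integrable {f : V → E} (hf : Integrable f) : Continuous (𝓕⁻ f) := by
  rw [fourierInv_eq_fourier_comp_neg]
  exact continuous_fourier_of_integrable hf.comp_neg

variable [CompleteSpace E]

lemma integral_fourier_smul_eq_of_integrable {φ : V → ℂ} {f : V → E} (hφ : Integrable φ)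
    (hf : Integrable f) : ∫ x, 𝓕 φ x • f x = ∫ x, φ x • 𝓕 f x := by
  have h := VectorFourier.integral_fourierIntegral_smul_eq_flip (L := innerₗ V)
    continuous_fourierChar continuous_inner hφ hf
  rwa [flip_innerₗ] at h

lemma integral_fourierInv_smul_eq_of_integrable {φ : V → ℂ} {f : V → E} (hφ : Integrable φ)
    (hf : Integrable f) : ∫ x, 𝓕⁻ φ x • f x = ∫ x, φ x • 𝓕⁻ f x :=
  calc ∫ x, 𝓕⁻ φ x • f x
    _ = ∫ x, 𝓕 φ (-x) • f (- -x) := by simp only [fourierInv_eq_fourier_neg, neg_neg]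
    _ = ∫ x, 𝓕 φ x • f (-x) := integral_neg_eq_self (fun x ↦ 𝓕 φ x • f (-x)) volume
    _ = ∫ x, φ x • 𝓕 (fun y ↦ f (-y)) x := integral_fourier_smul_eq_of_integrable hφ hf.comp_neg
    _ = ∫ x, φ x • 𝓕⁻ f x := by rw [fourierInv_eq_fourier_comp_neg]

theorem fourierInv_fourier_ae_eq {f : V → E} (hf : Integrable f) (hFf : Integrable (𝓕 f)) :
    𝓕⁻ (𝓕 f) =ᵐ[volume] f := by
  refine ae_eq_of_integral_contDiff_smul_eq
    (continuous_fourierInv_of_integrable hFf).locallyIntegrable hf.locallyIntegrable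
    fun g g_smooth g_cpt ↦ ?_
  have hg_cpt : HasCompactSupport (Complex.ofRealCLM ∘ g) := g_cpt.comp_left rfl
  let φ : SchwartzMap V ℂ := hg_cpt.toSchwartzMap (by fun_prop)
  calc ∫ x, g x • 𝓕⁻ (𝓕 f) x
    _ = ∫ x, φ x • 𝓕⁻ (𝓕 f) x := rfl
    _ = ∫ x, (𝓕⁻ φ) x • 𝓕 f x := by
      rw [SchwartzMap.fourierInv_coe, integral_fourierInv_smul_eq_of_integrable φ.integrable hFf]
    _ = ∫ x, (𝓕 (𝓕⁻ φ)) x • f x := by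
      rw [SchwartzMap.fourier_coe, integral_fourier_smul_eq_of_integrable (𝓕⁻ φ).integrable hf]
    _ = ∫ x, φ x • f x := by rw [FourierTransform.fourier_fourierInv_eq]
    _ = ∫ x, g x • f x := rfl

end FourierInversion

section ExponentialDecay

open Asymptotics Set Topology

variable {E : Type*} [NormedAddCommGroup E] {g : ℝ → E} {a b : ℝ}

lemma integrable_of_isBigO_exp_mul_atBot_atTop (hg : LocallyIntegrable g) (ha : 0 < a) (hb : b < 0)
    (hbot : g =O[atBot] fun x ↦ exp (a * x)) (htop : g =O[atTop] fun x ↦ exp (b * x)) :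
    Integrable g :=
  hg.integrable_of_isBigO_atBot_atTop hbot ⟨Iic 0, Iic_mem_atBot 0, integrableOn_exp_mul_Iic ha 0⟩
    htop ⟨Ioi 0, Ioi_mem_atTop 0, integrableOn_exp_mul_Ioi hb 0⟩

lemma exp_mul_neg_log {x : ℝ} (hx : 0 < x) (c : ℝ) : exp (c * -log x) = x ^ (-c) := by
  rw [rpow_def_of_pos hx]
  ring_nf

lemma isBigO_comp_neg_log_atTop (h : g =O[atBot] fun x ↦ exp (a * x)) :
    (fun x ↦ g (-log x)) =O[atTop] (· ^ (-a)) :=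
  (h.comp_tendsto (tendsto_neg_atTop_atBot.comp tendsto_log_atTop)).congr' .rfl <| by
    filter_upwards [eventually_gt_atTop 0] with x hx using exp_mul_neg_log hx a

lemma isBigO_comp_neg_log_nhdsGT_zero (h : g =O[atTop] fun x ↦ exp (b * x)) :
    (fun x ↦ g (-log x)) =O[𝓝[>] 0] (· ^ (-b)) :=
  (h.comp_tendsto (tendsto_neg_atBot_atTop.comp tendsto_log_nhdsGT_zero)).congr' .rfl <| by
    filter_upwards [self_mem_nhdsWithin] with x hx using exp_mul_neg_log hx b

lemma locallyIntegrableOn_comp_neg_log [NormedSpace ℝ E] (hg : LocallyIntegrable g) :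
    LocallyIntegrableOn (fun x ↦ g (-log x)) (Ioi 0) := by
  refine (locallyIntegrableOn_iff isOpen_Ioi.isLocallyClosed).2 fun K hK hK_cpt ↦ ?_
  have hlog : ContinuousOn (fun x ↦ -log x) K :=
    (continuousOn_log.mono fun x hx ↦ (hK hx).ne').neg
  have hL_cpt := hK_cpt.image_of_continuousOn hlog
  have himage : (fun u ↦ exp (-u)) '' ((fun x ↦ -log x) '' K) = K := by
    rw [image_image]
    exact (image_congr fun x hx ↦ by rw [neg_neg, exp_log (hK hx)]).trans (image_id' K)
  rw [← himage, integrableOn_image_iff_integrableOn_abs_deriv_smul hL_cpt.measurableSet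
    (fun u _ ↦ (hasDerivAt_neg u).exp.hasDerivWithinAt)
    (exp_injective.comp neg_injective).injOn]
  simp only [log_exp, neg_neg]
  exact (hg.integrableOn_isCompact hL_cpt).continuousOn_smul (by fun_prop) hL_cpt

end ExponentialDecay

section FourierLaplace

open Asymptotics

variable {E : Type*} [NormedAddCommGroup E] [NormedSpace ℂ E] {g : ℝ → E}

/-- The inverse Fourier–Laplace transform `z ↦ ∫ exp (2πiξz) g(ξ) dξ`: the inverse Fourier
transform of `g` at a complex argument. It is the Bochner integral, hence `0` where that
integral diverges. -/
noncomputable def fourierLaplaceInv (g : ℝ → E) (z : ℂ) : E :=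
  ∫ ξ : ℝ, Complex.exp (2 * π * Complex.I * ξ * z) • g ξ

lemma fourierLaplaceInv_ofReal (g : ℝ → E) (t : ℝ) : fourierLaplaceInv g t = 𝓕⁻ g t := by
  rw [fourierLaplaceInv, fourierInv_eq']
  congr! 4 with ξ
  simp only [RCLike.inner_apply, ringHom_apply, Complex.ofReal_mul, Complex.ofReal_ofNat]
  ring

lemma fourierLaplaceInv_eq_mellin (g : ℝ → E) (z : ℂ) :
    fourierLaplaceInv g z = mellin (fun x ↦ g (-log x)) (-2 * π * Complex.I * z) := by
  have hre : (-2 * π * Complex.I * z).re = 2 * π * z.im := by simp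
  have him : (-2 * π * Complex.I * z).im / (2 * π) = -z.re := by simp [field]
  rw [mellin_eq_fourier, fourier_real_eq_integral_exp_smul, hre, him, fourierLaplaceInv]
  congr! 2 with ξ
  simp only [log_exp, neg_neg]
  rw [← Complex.coe_smul (exp _), smul_smul, Complex.ofReal_exp, ← Complex.exp_add]
  congr 2
  push_cast
  linear_combination (-2 * π * Complex.I * ξ) * Complex.re_add_im z +
    (2 * π * ξ * z.im) * Complex.I_sq

theorem differentiableOn_fourierLaplaceInv {α β : ℝ} (hg : LocallyIntegrable g)
    (hbot : g =O[atBot] fun ξ ↦ exp (2 * π * β * ξ))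
    (htop : g =O[atTop] fun ξ ↦ exp (2 * π * α * ξ)) :
    DifferentiableOn ℂ (fourierLaplaceInv g) {z : ℂ | α < z.im ∧ z.im < β} := by
  intro z ⟨hαz, hzβ⟩
  have hre : (-2 * π * Complex.I * z).re = 2 * π * z.im := by simp
  have hmellin : DifferentiableAt ℂ (mellin fun x ↦ g (-log x)) (-2 * π * Complex.I * z) :=
    mellin_differentiableAt_of_isBigO_rpow (locallyIntegrableOn_comp_neg_log hg)
      (isBigO_comp_neg_log_atTop hbot) (by rw [hre]; gcongr)
      (isBigO_comp_neg_log_nhdsGT_zero htop) (by rw [hre]; gcongr)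
  rw [funext (fourierLaplaceInv_eq_mellin g)]
  exact (hmellin.comp z (by fun_prop)).differentiableWithinAt

theorem stmt_0_general [CompleteSpace E] {α β : ℝ} (hα : α < 0) (hβ : 0 < β) {f : ℝ → E}
    (hf : Integrable f) (hbot : 𝓕 f =O[atBot] fun ξ ↦ exp (2 * π * β * ξ))
    (htop : 𝓕 f =O[atTop] fun ξ ↦ exp (2 * π * α * ξ)) :
    ∃ F : ℂ → E, DifferentiableOn ℂ F {z : ℂ | α < z.im ∧ z.im < β} ∧ ∀ᵐ t : ℝ, F t = f t := by
  have hloc : LocallyIntegrable (𝓕 f) := (continuous_fourier_of_integrable hf).locallyIntegrable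
  have hint : Integrable (𝓕 f) := integrable_of_isBigO_exp_mul_atBot_atTop hloc (by positivity)
    (mul_neg_of_pos_of_neg two_pi_pos hα) hbot htop
  refine ⟨fourierLaplaceInv (𝓕 f), differentiableOn_fourierLaplaceInv hloc hbot htop, ?_⟩
  filter_upwards [fourierInv_fourier_ae_eq hf hint] with t ht
  rw [fourierLaplaceInv_ofReal, ht]

end FourierLaplace

/-- If `f ∈ L¹(ℝ)` and its Fourier transform decays like `e^{2π α₊ ξ}` as
`ξ → -∞` and like `e^{2π α₋ ξ}` as `ξ → +∞` (with `α₋ < 0 < α₊`), then `f` agrees a.e. with a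
function holomorphic on the open horizontal strip `{z : α₋ < Im z < α₊}`. -/
theorem stmt_0 (αm αp : ℝ) (hαm : αm < 0) (hαp : 0 < αp)
    (f : ℝ → ℂ) (hf : Integrable f)
    (C R : ℝ) (hC : 0 < C) (hR : 0 < R)
    (hdecay_neg : ∀ ξ : ℝ, ξ ≤ -R → ‖𝓕 f ξ‖ ≤ C * Real.exp (2 * π * αp * ξ))
    (hdecay_pos : ∀ ξ : ℝ, R ≤ ξ → ‖𝓕 f ξ‖ ≤ C * Real.exp (2 * π * αm * ξ)) :
    ∃ F : ℂ → ℂ, DifferentiableOn ℂ F {z : ℂ | αm < z.im ∧ z.im < αp} ∧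
      ∀ᵐ t : ℝ, F (t : ℂ) = f t := by
  refine stmt_0_general hαm hαp hf (.of_bound C ?_) (.of_bound C ?_)
  · filter_upwards [eventually_le_atBot (-R)] with ξ hξ using by simpa using hdecay_neg ξ hξ
  · filter_upwards [eventually_ge_atTop R] with ξ hξ using by simpa using hdecay_pos ξ hξ
end

section
/- Let α > 0, let σ ∈ {1, −1}, and let f : ℂ → ℂ be holomorphic on an open set containing the closed horizontal strip {z ∈ ℂ : σ·Im z ∈ [0, α]}. Assume that the functions t ↦ f(t) and t ↦ f(t + σiα) are Lebesgue integrable on ℝ, and that sup_{y : σ y ∈ [0,α]} |f(t + i y)| → 0 as t → +∞ and as t → −∞. Then for every ξ ∈ ℝ, |𝓕[f|_ℝ](ξ)| ≤ e^{2πσαξ} · ∫_ℝ |f(t + iσα)| dt. -/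
open MeasureTheory FourierTransform Filter Real

/-!
The kernel `z ↦ exp (-2πiξz)` is entire and has modulus `exp (2πξ Im z)`, so multiplying `f` by it
preserves holomorphy, decay at both ends of a strip, and integrability along horizontal lines.
By Cauchy's theorem on rectangles `[-T, T] × [a, b]`, whose vertical sides contribute nothing in
the limit `T → ∞`, the product has the same integral along both boundary lines of the strip. This
relates the Fourier transforms of `f` on the two lines by an explicit factor, and the `L¹` bound for
the Fourier transform on the far line is the claim.
-/

section UniformDecay

variable {ι α 𝕜 E : Type*} [NormedField 𝕜] [NormedAddCommGroup E] [NormedSpace 𝕜 E]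
  {s : Set α}

theorem tendstoUniformlyOn_zero_smul_of_norm_le {l : Filter ι} {F : ι → α → E} {c : ι → α → 𝕜}
    {C : ℝ} (hc : ∀ i, ∀ y ∈ s, ‖c i y‖ ≤ C) (hF : TendstoUniformlyOn F 0 l s) :
    TendstoUniformlyOn (fun i y ↦ c i y • F i y) 0 l s := by
  rw [SeminormedAddGroup.tendstoUniformlyOn_zero] at hF ⊢
  intro ε hε
  filter_upwards [hF (ε / (|C| + 1)) (by positivity)] with i hi y hy
  calc ‖c i y • F i y‖ = ‖c i y‖ * ‖F i y‖ := norm_smul _ _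
    _ ≤ (|C| + 1) * ‖F i y‖ := by
      gcongr
      linarith [hc i y hy, le_abs_self C]
    _ < ε := (lt_div_iff₀' (by positivity)).1 (hi y hy)

theorem tendstoUniformlyOn_zero_cocompact_of_norm_le {X : Type*} [NormedAddCommGroup X]
    [ProperSpace X] {F : X → α → E}
    (hF : ∀ ε > 0, ∃ T : ℝ, ∀ x, T ≤ ‖x‖ → ∀ y ∈ s, ‖F x y‖ ≤ ε) :
    TendstoUniformlyOn F 0 (cocompact X) s := by
  rw [SeminormedAddGroup.tendstoUniformlyOn_zero]
  intro ε hε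
  obtain ⟨T, hT⟩ := hF (ε / 2) (half_pos hε)
  filter_upwards [tendsto_norm_cocompact_atTop.eventually_ge_atTop T] with x hx y hy
  exact (hT x hx y hy).trans_lt (half_lt_self hε)

end UniformDecay

theorem mul_mem_Icc_of_mem_uIcc_zero_mul {σ α y : ℝ} (hσ : |σ| ≤ 1) (hα : 0 ≤ α)
    (hy : y ∈ Set.uIcc 0 (σ * α)) : σ * y ∈ Set.Icc 0 α := by
  have himage : (σ * ·) '' Set.uIcc 0 α = Set.uIcc 0 (σ * α) := by
    rw [Set.image_const_mul_uIcc, mul_zero]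
  rw [← himage, Set.uIcc_of_le hα] at hy
  obtain ⟨x, ⟨hx₀, hxα⟩, rfl⟩ := hy
  have hsq : σ * σ ≤ 1 := by simpa [sq] using (sq_le_one_iff_abs_le_one σ).2 hσ
  rw [← mul_assoc]
  exact ⟨mul_nonneg (mul_self_nonneg σ) hx₀, (mul_le_of_le_one_left hx₀ hsq).trans hxα⟩

theorem continuousOn_vertical_line {X : Type*} [TopologicalSpace X] {f : ℂ → X} {s : Set ℝ}
    (hc : ContinuousOn f (Complex.im ⁻¹' s)) (x : ℝ) :
    ContinuousOn (fun y : ℝ ↦ f (x + y * Complex.I)) s :=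
  hc.comp (by fun_prop) fun y hy ↦ by simpa using hy

section Strip

variable {E : Type*} [NormedAddCommGroup E] [NormedSpace ℂ E] {f : ℂ → E} {a b : ℝ}

theorem tendsto_integral_vertical_segment_zero {l : Filter ℝ} [l.IsCountablyGenerated]
    (hc : ContinuousOn f (Complex.im ⁻¹' Set.uIcc a b))
    (hdecay : TendstoUniformlyOn (fun x y : ℝ ↦ f (x + y * Complex.I)) 0 l (Set.uIcc a b)) :
    Tendsto (fun x : ℝ ↦ ∫ y in a..b, f (x + y * Complex.I)) l (nhds 0) := by
  simpa using hdecay.tendsto_intervalIntegral_of_continuousOn (μ := volume)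
    (.of_forall (continuousOn_vertical_line hc))

theorem integral_boundary_strip_rect_eq_zero
    (hc : ContinuousOn f (Complex.im ⁻¹' Set.uIcc a b))
    (hd : DifferentiableOn ℂ f (Complex.im ⁻¹' Set.uIoo a b)) (S T : ℝ) :
    (∫ x in S..T, f (x + a * Complex.I)) - (∫ x in S..T, f (x + b * Complex.I)) +
      Complex.I • (∫ y in a..b, f (T + y * Complex.I)) -
      Complex.I • (∫ y in a..b, f (S + y * Complex.I)) = 0 :=
  Complex.integral_boundary_rect_eq_zero_of_continuousOn_of_differentiableOn f ⟨S, a⟩ ⟨T, b⟩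
    (hc.mono Set.inter_subset_right) (hd.mono Set.inter_subset_right)

theorem integral_horizontal_line_eq
    (hc : ContinuousOn f (Complex.im ⁻¹' Set.uIcc a b))
    (hd : DifferentiableOn ℂ f (Complex.im ⁻¹' Set.uIoo a b))
    (hint_a : Integrable fun t : ℝ ↦ f (t + a * Complex.I))
    (hint_b : Integrable fun t : ℝ ↦ f (t + b * Complex.I))
    (hdecay : TendstoUniformlyOn (fun x y : ℝ ↦ f (x + y * Complex.I)) 0 (cocompact ℝ)
      (Set.uIcc a b)) :
    ∫ t : ℝ, f (t + a * Complex.I) = ∫ t : ℝ, f (t + b * Complex.I) := by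
  have hbottom := intervalIntegral_tendsto_integral hint_a tendsto_neg_atTop_atBot tendsto_id
  have htop := intervalIntegral_tendsto_integral hint_b tendsto_neg_atTop_atBot tendsto_id
  have hright := tendsto_integral_vertical_segment_zero hc
    fun u hu ↦ atTop_le_cocompact (hdecay u hu)
  have hleft := (tendsto_integral_vertical_segment_zero hc
    fun u hu ↦ atBot_le_cocompact (hdecay u hu)).comp tendsto_neg_atTop_atBot
  have hboundary := ((hbottom.sub htop).add (hright.const_smul Complex.I)).sub
    (hleft.const_smul Complex.I)
  have hzero := tendsto_nhds_unique hboundary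
    (tendsto_const_nhds.congr fun T ↦ (integral_boundary_strip_rect_eq_zero hc hd (-T) T).symm)
  simpa [sub_eq_zero] using hzero

end Strip

/-- The Fourier kernel `t ↦ exp (-2πiξt)` extended to an entire function of `t`. -/
noncomputable def fourierKernel (ξ : ℝ) (z : ℂ) : ℂ :=
  Complex.exp (-2 * π * Complex.I * ξ * z)

namespace fourierKernel

theorem differentiable (ξ : ℝ) : Differentiable ℂ (fourierKernel ξ) := by
  unfold fourierKernel
  fun_prop

theorem apply_add_mul_I (ξ t y : ℝ) :
    fourierKernel ξ (t + y * Complex.I) =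
      (rexp (2 * π * y * ξ) : ℂ) * Complex.exp (↑(-2 * π * t * ξ) * Complex.I) := by
  rw [fourierKernel, Complex.ofReal_exp, ← Complex.exp_add]
  congr 1
  push_cast
  linear_combination (-2 * π * ξ * y : ℂ) * Complex.I_mul_I

theorem norm_apply_add_mul_I (ξ t y : ℝ) :
    ‖fourierKernel ξ (t + y * Complex.I)‖ = rexp (2 * π * y * ξ) := by
  rw [apply_add_mul_I, norm_mul, Complex.norm_exp_ofReal_mul_I, mul_one,
    Complex.norm_of_nonneg (exp_pos _).le]

variable {E : Type*} [NormedAddCommGroup E] [NormedSpace ℂ E] {f : ℂ → E}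

theorem integral_horizontal_line_smul (f : ℂ → E) (ξ y : ℝ) :
    ∫ t : ℝ, fourierKernel ξ (t + y * Complex.I) • f (t + y * Complex.I) =
      rexp (2 * π * y * ξ) • 𝓕 (fun t : ℝ ↦ f (t + y * Complex.I)) ξ := by
  rw [Real.fourier_real_eq_integral_exp_smul, ← integral_smul]
  simp only [apply_add_mul_I, mul_smul, Complex.coe_smul]

theorem integrable_horizontal_line_smul {y : ℝ}
    (hf : Integrable fun t : ℝ ↦ f (t + y * Complex.I)) (ξ : ℝ) :
    Integrable fun t : ℝ ↦ fourierKernel ξ (t + y * Complex.I) • f (t + y * Complex.I) := by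
  have hcont : Continuous fun t : ℝ ↦ fourierKernel ξ (t + y * Complex.I) :=
    (differentiable ξ).continuous.comp (by fun_prop)
  exact hf.bdd_smul (rexp (2 * π * y * ξ)) hcont.aestronglyMeasurable
    (.of_forall fun t ↦ (norm_apply_add_mul_I ξ t y).le)

theorem tendstoUniformlyOn_smul {l : Filter ℝ} {s : Set ℝ} (hs : IsCompact s)
    (hdecay : TendstoUniformlyOn (fun x y : ℝ ↦ f (x + y * Complex.I)) 0 l s) (ξ : ℝ) :
    TendstoUniformlyOn
      (fun x y : ℝ ↦ fourierKernel ξ (x + y * Complex.I) • f (x + y * Complex.I)) 0 l s := by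
  obtain ⟨C, hC⟩ := hs.exists_bound_of_continuousOn
    (f := fun y ↦ rexp (2 * π * y * ξ)) (by fun_prop)
  refine tendstoUniformlyOn_zero_smul_of_norm_le (C := C) (fun x y hy ↦ ?_) hdecay
  simpa [norm_apply_add_mul_I] using hC y hy

end fourierKernel

section FourierStrip

variable {E : Type*} [NormedAddCommGroup E] [NormedSpace ℂ E] {f : ℂ → E}

theorem exp_smul_fourier_horizontal_line_eq {a b : ℝ}
    (hc : ContinuousOn f (Complex.im ⁻¹' Set.uIcc a b))
    (hd : DifferentiableOn ℂ f (Complex.im ⁻¹' Set.uIoo a b))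
    (hint_a : Integrable fun t : ℝ ↦ f (t + a * Complex.I))
    (hint_b : Integrable fun t : ℝ ↦ f (t + b * Complex.I))
    (hdecay : TendstoUniformlyOn (fun x y : ℝ ↦ f (x + y * Complex.I)) 0 (cocompact ℝ)
      (Set.uIcc a b)) (ξ : ℝ) :
    rexp (2 * π * a * ξ) • 𝓕 (fun t : ℝ ↦ f (t + a * Complex.I)) ξ =
      rexp (2 * π * b * ξ) • 𝓕 (fun t : ℝ ↦ f (t + b * Complex.I)) ξ := by
  have hkernel := fourierKernel.differentiable ξ
  rw [← fourierKernel.integral_horizontal_line_smul, ← fourierKernel.integral_horizontal_line_smul]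
  exact integral_horizontal_line_eq (f := fun z ↦ fourierKernel ξ z • f z)
    (hkernel.continuous.continuousOn.smul hc) (hkernel.differentiableOn.smul hd)
    (fourierKernel.integrable_horizontal_line_smul hint_a ξ)
    (fourierKernel.integrable_horizontal_line_smul hint_b ξ)
    (fourierKernel.tendstoUniformlyOn_smul isCompact_uIcc hdecay ξ)

theorem stmt_1_general [CompleteSpace E] {β : ℝ}
    (hc : ContinuousOn f (Complex.im ⁻¹' Set.uIcc 0 β))
    (hd : DifferentiableOn ℂ f (Complex.im ⁻¹' Set.uIoo 0 β))
    (hint₁ : Integrable fun t : ℝ ↦ f t)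
    (hint₂ : Integrable fun t : ℝ ↦ f (t + β * Complex.I))
    (hdecay : TendstoUniformlyOn (fun x y : ℝ ↦ f (x + y * Complex.I)) 0 (cocompact ℝ)
      (Set.uIcc 0 β)) (ξ : ℝ) :
    ‖𝓕 (fun t : ℝ ↦ f t) ξ‖ ≤ rexp (2 * π * β * ξ) * ∫ t : ℝ, ‖f (t + β * Complex.I)‖ := by
  have hshift : 𝓕 (fun t : ℝ ↦ f t) ξ =
      rexp (2 * π * β * ξ) • 𝓕 (fun t : ℝ ↦ f (t + β * Complex.I)) ξ := by
    simpa using exp_smul_fourier_horizontal_line_eq hc hd (by simpa using hint₁) hint₂ hdecay ξ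
  rw [hshift, norm_smul, Real.norm_of_nonneg (exp_pos _).le]
  gcongr
  exact VectorFourier.norm_fourierIntegral_le_integral_norm _ _ _ _ _

end FourierStrip

/-- If `f` is holomorphic on an open set containing the closed horizontal
strip `{z : σ Im z ∈ [0, α]}`, with `t ↦ f t` and `t ↦ f (t + σiα)` integrable on `ℝ`, and
`sup_{σ y ∈ [0,α]} |f(t+iy)| → 0` as `t → ±∞`, then for every `ξ`,
`|𝓕[f|_ℝ](ξ)| ≤ e^{2πσαξ} ∫ |f(t + iσα)| dt`. -/
theorem stmt_1 (α : ℝ) (hα : 0 < α) (σ : ℝ) (hσ : σ = 1 ∨ σ = -1)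
    (f : ℂ → ℂ)
    (hol : ∃ U : Set ℂ, IsOpen U ∧ {z : ℂ | σ * z.im ∈ Set.Icc 0 α} ⊆ U ∧
      DifferentiableOn ℂ f U)
    (hint₁ : Integrable (fun t : ℝ => f t))
    (hint₂ : Integrable (fun t : ℝ => f (t + ((σ * α : ℝ) : ℂ) * Complex.I)))
    (hdecay : ∀ ε > 0, ∃ T : ℝ, ∀ t : ℝ, T ≤ |t| → ∀ y : ℝ, σ * y ∈ Set.Icc 0 α →
      ‖f (t + (y : ℂ) * Complex.I)‖ ≤ ε) :
    ∀ ξ : ℝ, ‖𝓕 (fun t : ℝ => f t) ξ‖ ≤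
      Real.exp (2 * π * σ * α * ξ) * ∫ t : ℝ, ‖f (t + ((σ * α : ℝ) : ℂ) * Complex.I)‖ := by
  obtain ⟨U, -, hstrip, hf⟩ := hol
  have hmem {y : ℝ} : y ∈ Set.uIcc 0 (σ * α) → σ * y ∈ Set.Icc 0 α :=
    mul_mem_Icc_of_mem_uIcc_zero_mul (by rcases hσ with rfl | rfl <;> simp) hα.le
  have hsub : Complex.im ⁻¹' Set.uIcc 0 (σ * α) ⊆ U := fun z hz ↦ hstrip (hmem hz)
  have hunif : TendstoUniformlyOn (fun x y : ℝ ↦ f (x + y * Complex.I)) 0 (cocompact ℝ)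
      (Set.uIcc 0 (σ * α)) :=
    tendstoUniformlyOn_zero_cocompact_of_norm_le fun ε hε ↦
      (hdecay ε hε).imp fun T hT t ht y hy ↦ hT t ht y (hmem hy)
  simpa only [mul_assoc] using stmt_1_general (hf.continuousOn.mono hsub)
    (hf.mono ((Set.preimage_mono Set.uIoo_subset_uIcc_self).trans hsub)) hint₁ hint₂ hunif
end

section
/- Let J be a finite index set, let d be a positive integer, let (c_j)_{j∈J} be complex numbers, and let ((γ_j, φ_j))_{j∈J} be a family of pairwise distinct pairs where each γ_j ∈ ℝ and each φ_j is a real polynomial with φ_j(0) = 0. Define E : (0,∞) → ℂ by E(y) = ∑_{j∈J} c_j · y^{iγ_j} · e^{i φ_j(y^{−1/d})}. If c_j ≠ 0 for some j ∈ J, then there exist ε > 0 and a sequence (s_i)_{i∈ℕ} of positive reals converging to 0 such that |E(s_i)| ≥ ε for all i ∈ ℕ. -/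
open Filter

/-!
In the variable `x = y ^ (-1 / d)`, which tends to `∞`, the terms of `E` are constant multiples of
`exp (i (β log x + p x))` with `β = -d γ`, and the claim is that such a sum tends to `0` only if
its coefficients vanish. This is Dedekind's independence of characters, carried out
asymptotically: a substitution `x ↦ g x` that multiplies every term, up to `o(1)` and a common
unimodular factor, by a constant `z j` allows eliminating terms whenever the `z j` are not all
equal. The substitution `g x = x * exp (h / x ^ k)` shifts the phase `β log x + p x` by
`h` times the `k`-th coefficient of the polynomial `x * (β log x + p x)'`, provided this
polynomial has degree at most `k`. Comparing all phases with a fixed one and taking for `k` the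
largest degree that occurs gives the required separation.
-/

open scoped Topology Polynomial

section AsymptoticIndependence

variable {α ι : Type*} {F : Filter α}

/-- `w` is asymptotically an eigenfunction, with eigenvalue `z`, of the substitution `x ↦ g x`
along the filter `F`. -/
def HasAsymptoticMultiplier (F : Filter α) (g : α → α) (w : α → Circle) (z : Circle) : Prop :=
  Tendsto (fun x => w (g x) / w x) F (𝓝 z)

theorem tendsto_circle_mul_zero_iff {u : α → Circle} {f : α → ℂ} :
    Tendsto (fun x => u x * f x) F (𝓝 0) ↔ Tendsto f F (𝓝 0) := by
  rw [tendsto_zero_iff_norm_tendsto_zero, tendsto_zero_iff_norm_tendsto_zero (f := f)]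
  simp only [norm_mul, Circle.norm_coe, one_mul]

theorem HasAsymptoticMultiplier.tendsto_comp_sub_mul {g : α → α} {w : α → Circle} {z : Circle}
    (h : HasAsymptoticMultiplier F g w z) :
    Tendsto (fun x => (w (g x) - z * w x : ℂ)) F (𝓝 0) := by
  have hcoe : Tendsto (fun x => ((w (g x) / w x : Circle) : ℂ)) F (𝓝 z) :=
    (continuous_subtype_val.tendsto z).comp h
  have hzero : Tendsto (fun x => ((w (g x) / w x : Circle) - z : ℂ)) F (𝓝 0) := by
    simpa only [sub_self] using hcoe.sub_const (z : ℂ)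
  refine (tendsto_circle_mul_zero_iff (u := w).2 hzero).congr fun x => ?_
  rw [mul_sub, ← Circle.coe_mul, mul_div_cancel, mul_comm (z : ℂ)]

theorem tendsto_sum_mul_multiplier {S : Finset ι} {g : α → α} {w : ι → α → Circle}
    {z : ι → Circle} {c : ι → ℂ} (hg : Tendsto g F F)
    (hz : ∀ j ∈ S, HasAsymptoticMultiplier F g (w j) (z j))
    (hsum : Tendsto (fun x => ∑ j ∈ S, c j * w j x) F (𝓝 0)) :
    Tendsto (fun x => ∑ j ∈ S, c j * z j * w j x) F (𝓝 0) := by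
  have herror : Tendsto (fun x => ∑ j ∈ S, c j * (w j (g x) - z j * w j x)) F (𝓝 0) := by
    simpa only [mul_zero, Finset.sum_const_zero] using
      tendsto_finsetSum S fun j hj => (hz j hj).tendsto_comp_sub_mul.const_mul (c j)
  have hdiff := (hsum.comp hg).sub herror
  rw [sub_zero] at hdiff
  refine hdiff.congr fun x => ?_
  simp only [Function.comp_apply, ← Finset.sum_sub_distrib]
  exact Finset.sum_congr rfl fun j _ => by ring

theorem tendsto_sum_mul_multiplier_sub {S : Finset ι} {g : α → α} {u : ι → α → Circle}
    {w : α → Circle} {z : ι → Circle} {c : ι → ℂ} (hg : Tendsto g F F)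
    (hz : ∀ j ∈ S, HasAsymptoticMultiplier F g (u j / w) (z j))
    (hsum : Tendsto (fun x => ∑ j ∈ S, c j * u j x) F (𝓝 0)) (a : ℂ) :
    Tendsto (fun x => ∑ j ∈ S, c j * (z j - a) * u j x) F (𝓝 0) := by
  have factor (b : ι → ℂ) (x : α) :
      w x * ∑ j ∈ S, b j * ((u j / w) x : Circle) = ∑ j ∈ S, b j * u j x := by
    rw [Finset.mul_sum]
    refine Finset.sum_congr rfl fun j _ => ?_
    rw [mul_left_comm, ← Circle.coe_mul, Pi.div_apply, mul_div_cancel]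
  have hratio : Tendsto (fun x => ∑ j ∈ S, c j * ((u j / w) x : Circle)) F (𝓝 0) :=
    tendsto_circle_mul_zero_iff.1 (hsum.congr fun x => (factor c x).symm)
  have hmul : Tendsto (fun x => ∑ j ∈ S, c j * z j * u j x) F (𝓝 0) :=
    (tendsto_circle_mul_zero_iff.2 (tendsto_sum_mul_multiplier hg hz hratio)).congr
      fun x => factor (fun j => c j * z j) x
  have hdiff := hmul.sub (hsum.const_mul a)
  rw [mul_zero, sub_zero] at hdiff
  refine hdiff.congr fun x => ?_
  rw [Finset.mul_sum, ← Finset.sum_sub_distrib]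
  exact Finset.sum_congr rfl fun j _ => by ring

/-- The unimodular functions `u j`, `j ∈ S`, are distinguished by a substitution: up to a common
factor `w` they have asymptotic multipliers that are not all equal. -/
def AsymptoticallySeparated (F : Filter α) (u : ι → α → Circle) (S : Finset ι) : Prop :=
  ∃ (g : α → α) (w : α → Circle) (z : ι → Circle), Tendsto g F F ∧
    (∀ j ∈ S, HasAsymptoticMultiplier F g (u j / w) (z j)) ∧ ∃ l ∈ S, ∃ m ∈ S, z l ≠ z m

theorem eq_zero_of_tendsto_sum_of_asymptoticallySeparated [F.NeBot] {u : ι → α → Circle}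
    (hsep : ∀ S : Finset ι, S.Nontrivial → AsymptoticallySeparated F u S) (S : Finset ι)
    {c : ι → ℂ} (hsum : Tendsto (fun x => ∑ j ∈ S, c j * u j x) F (𝓝 0)) :
    ∀ j ∈ S, c j = 0 := by
  classical
  induction S using Finset.strongInduction generalizing c with
  | H S ih =>
    have of_erase {b : ι → ℂ} {l : ι} (hl : l ∈ S) (hbl : b l = 0)
        (hb : Tendsto (fun x => ∑ j ∈ S, b j * u j x) F (𝓝 0)) : ∀ j ∈ S, b j = 0 := by
      have herase : ∀ j ∈ S.erase l, b j = 0 :=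
        ih _ (Finset.erase_ssubset hl) <| hb.congr fun x =>
          (Finset.sum_erase S (by rw [hbl, zero_mul])).symm
      intro j hj
      obtain rfl | hjl := eq_or_ne j l
      · exact hbl
      · exact herase j (Finset.mem_erase.2 ⟨hjl, hj⟩)
    obtain hS | hS := (S : Set ι).subsingleton_or_nontrivial
    · intro l hl
      obtain rfl : S = {l} := Finset.coe_injective (by simpa using hS.eq_singleton_of_mem hl)
      simp only [Finset.sum_singleton, mul_comm (c l)] at hsum
      exact tendsto_nhds_unique tendsto_const_nhds (tendsto_circle_mul_zero_iff.1 hsum)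
    · obtain ⟨g, w, z, hg, hz, l, hl, m, hm, hlm⟩ := hsep S hS
      have hprod : c m * (z m - z l) = 0 :=
        of_erase hl (by rw [sub_self, mul_zero])
          (tendsto_sum_mul_multiplier_sub hg hz hsum (z l)) m hm
      have hzlm : (z m - z l : ℂ) ≠ 0 := sub_ne_zero.2 (Circle.coe_injective.ne hlm.symm)
      exact of_erase hm ((mul_eq_zero.1 hprod).resolve_right hzlm) hsum

end AsymptoticIndependence

section LogPolyPhase

/-- The phase `β log x + p x`. -/
noncomputable def logPolyPhase (β : ℝ) (p : ℝ[X]) (x : ℝ) : ℝ :=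
  β * Real.log x + p.eval x

/-- The Euler derivative `x * ψ' x` of the phase `ψ x = β log x + p x`, as a polynomial in `x`. -/
noncomputable def eulerDerivative (β : ℝ) (p : ℝ[X]) : ℝ[X] :=
  .C β + .X * p.derivative

/-- The substitution `x ↦ x * exp (h / x ^ k)`, which shifts `x ^ k / k` by `h` as `x → ∞`
(and `log x` by `h` if `k = 0`). -/
noncomputable def expDilation (h : ℝ) (k : ℕ) (x : ℝ) : ℝ :=
  x * Real.exp (h / x ^ k)

theorem logPolyPhase_sub (β₁ β₂ : ℝ) (p₁ p₂ : ℝ[X]) (x : ℝ) :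
    logPolyPhase (β₁ - β₂) (p₁ - p₂) x = logPolyPhase β₁ p₁ x - logPolyPhase β₂ p₂ x := by
  simp only [logPolyPhase, Polynomial.eval_sub]
  ring

theorem eulerDerivative_sub (β₁ β₂ : ℝ) (p₁ p₂ : ℝ[X]) :
    eulerDerivative (β₁ - β₂) (p₁ - p₂) = eulerDerivative β₁ p₁ - eulerDerivative β₂ p₂ := by
  simp only [eulerDerivative, Polynomial.C_sub, Polynomial.derivative_sub]
  ring

theorem coeff_eulerDerivative (β : ℝ) (p : ℝ[X]) (k : ℕ) :
    (eulerDerivative β p).coeff k = (if k = 0 then β else 0) + k * p.coeff k := by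
  cases k with
  | zero => simp [eulerDerivative]
  | succ k =>
    simp [eulerDerivative, Polynomial.coeff_X_mul, Polynomial.coeff_derivative, mul_comm]

theorem natDegree_le_of_natDegree_eulerDerivative_le {β : ℝ} {p : ℝ[X]} {k : ℕ}
    (hk : (eulerDerivative β p).natDegree ≤ k) : p.natDegree ≤ k := by
  refine Polynomial.natDegree_le_iff_coeff_eq_zero.2 fun n hn => ?_
  have hcoeff := Polynomial.natDegree_le_iff_coeff_eq_zero.1 hk n hn
  have hn0 : n ≠ 0 := by omega
  simpa [coeff_eulerDerivative, hn0] using hcoeff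

theorem eulerDerivative_inj {β₁ β₂ : ℝ} {p₁ p₂ : ℝ[X]} (h₀ : p₁.eval 0 = p₂.eval 0) :
    eulerDerivative β₁ p₁ = eulerDerivative β₂ p₂ ↔ β₁ = β₂ ∧ p₁ = p₂ := by
  refine ⟨fun heq => ?_, fun ⟨hβ, hp⟩ => by rw [hβ, hp]⟩
  have hcoeff (n : ℕ) := congrArg (Polynomial.coeff · n) heq
  simp only [coeff_eulerDerivative] at hcoeff
  refine ⟨by simpa using hcoeff 0, Polynomial.ext fun n => ?_⟩
  obtain rfl | hn := eq_or_ne n 0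
  · simpa only [Polynomial.coeff_zero_eq_eval_zero] using h₀
  · simpa [hn] using hcoeff n

theorem tendsto_div_pow_atTop (h : ℝ) (k : ℕ) :
    Tendsto (fun x : ℝ => h / x ^ k) atTop (𝓝 (if k = 0 then h else 0)) := by
  split_ifs with hk
  · simp [hk]
  · exact tendsto_const_nhds.div_atTop (tendsto_pow_atTop hk)

theorem tendsto_expDilation_atTop (h : ℝ) (k : ℕ) : Tendsto (expDilation h k) atTop atTop :=
  tendsto_id.atTop_mul_pos (Real.exp_pos _)
    ((Real.continuous_exp.tendsto _).comp (tendsto_div_pow_atTop h k))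

theorem tendsto_log_expDilation_sub (h : ℝ) (k : ℕ) :
    Tendsto (fun x => Real.log (expDilation h k x) - Real.log x) atTop
      (𝓝 (if k = 0 then h else 0)) := by
  refine (tendsto_div_pow_atTop h k).congr' ?_
  filter_upwards [eventually_gt_atTop 0] with x hx
  rw [expDilation, Real.log_mul hx.ne' (Real.exp_ne_zero _), Real.log_exp, add_sub_cancel_left]

theorem tendsto_pow_mul_exp_div_pow_sub_one (a : ℝ) {k n : ℕ} (hk : k ≠ 0) (hn : n ≤ k) :
    Tendsto (fun x : ℝ => x ^ n * (Real.exp (a / x ^ k) - 1)) atTop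
      (𝓝 (if n = k then a else 0)) := by
  have hderiv : HasDerivAt (fun u => Real.exp (a * u)) a 0 := by
    simpa using ((hasDerivAt_id (0 : ℝ)).const_mul a).exp
  have hinv : Tendsto (fun x : ℝ => (x ^ k)⁻¹) atTop (𝓝[≠] 0) :=
    (tendsto_inv_atTop_nhdsGT_zero.comp (tendsto_pow_atTop hk)).mono_right
      (nhdsGT_le_nhdsNE 0)
  have hslope := (hasDerivAt_iff_tendsto_slope_zero.1 hderiv).comp hinv
  have hratio : Tendsto (fun x : ℝ => x ^ n / x ^ k) atTop (𝓝 (if n = k then 1 else 0)) := by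
    split_ifs with hnk
    · subst hnk
      refine tendsto_const_nhds.congr' ?_
      filter_upwards [eventually_gt_atTop 0] with x hx
      rw [div_self (pow_pos hx n).ne']
    · exact tendsto_pow_div_pow_atTop_zero (lt_of_le_of_ne hn hnk)
  have hmul := hratio.mul hslope
  rw [ite_mul, one_mul, zero_mul] at hmul
  refine hmul.congr' ?_
  filter_upwards [eventually_gt_atTop 0] with x hx
  simp only [Function.comp_apply, zero_add, mul_zero, Real.exp_zero, inv_inv, smul_eq_mul,
    ← div_eq_mul_inv]
  field_simp

theorem tendsto_expDilation_pow_sub (h : ℝ) {k n : ℕ} (hn : n ≤ k) :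
    Tendsto (fun x => expDilation h k x ^ n - x ^ n) atTop (𝓝 (if n = k then n * h else 0)) := by
  obtain rfl | hn₀ := eq_or_ne n 0
  · simp
  refine (tendsto_pow_mul_exp_div_pow_sub_one (n * h) (by omega) hn).congr fun x => ?_
  rw [expDilation, mul_pow, ← Real.exp_nat_mul, mul_div_assoc, mul_sub_one]

theorem tendsto_eval_expDilation_sub (h : ℝ) {k : ℕ} {p : ℝ[X]} (hp : p.natDegree ≤ k) :
    Tendsto (fun x => p.eval (expDilation h k x) - p.eval x) atTop
      (𝓝 (k * p.coeff k * h)) := by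
  have hsum := tendsto_finsetSum (Finset.range (k + 1)) fun n hn =>
    (tendsto_expDilation_pow_sub h (Finset.mem_range_succ_iff.1 hn)).const_mul (p.coeff n)
  have hlimit : ∑ n ∈ Finset.range (k + 1), p.coeff n * (if n = k then n * h else 0) =
      k * p.coeff k * h := by
    simp [mul_left_comm, mul_assoc]
  rw [hlimit] at hsum
  refine hsum.congr fun x => ?_
  simp only [Polynomial.eval_eq_sum_range' (Nat.lt_succ_of_le hp), mul_sub,
    Finset.sum_sub_distrib]

theorem tendsto_logPolyPhase_expDilation_sub {β : ℝ} {p : ℝ[X]} {k : ℕ}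
    (hk : (eulerDerivative β p).natDegree ≤ k) (h : ℝ) :
    Tendsto (fun x => logPolyPhase β p (expDilation h k x) - logPolyPhase β p x) atTop
      (𝓝 ((eulerDerivative β p).coeff k * h)) := by
  have hlog := (tendsto_log_expDilation_sub h k).const_mul β
  have heval := tendsto_eval_expDilation_sub h (natDegree_le_of_natDegree_eulerDerivative_le hk)
  have hlimit : (eulerDerivative β p).coeff k * h =
      β * (if k = 0 then h else 0) + k * p.coeff k * h := by
    rw [coeff_eulerDerivative, add_mul, ite_mul, mul_ite, zero_mul, mul_zero]
  rw [hlimit]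
  refine (hlog.add heval).congr fun x => ?_
  simp only [logPolyPhase]
  ring

end LogPolyPhase

theorem exists_natDegree_sub_le_and_coeff_ne {R ι : Type*} [Ring R] {q : ι → R[X]}
    {S : Finset ι} (hq : Set.InjOn q S) (hS : S.Nontrivial) :
    ∃ l ∈ S, ∃ m ∈ S, ∃ k, (∀ j ∈ S, (q j - q l).natDegree ≤ k) ∧
      (q m - q l).coeff k ≠ 0 := by
  classical
  obtain ⟨l, hl⟩ := hS.nonempty
  obtain ⟨m, hm, hmax⟩ := (S.erase l).exists_max_image (fun j => (q j - q l).natDegree)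
    ((Finset.erase_nonempty hl).2 hS)
  obtain ⟨hml, hmS⟩ := Finset.mem_erase.1 hm
  refine ⟨l, hl, m, hmS, (q m - q l).natDegree, fun j hj => ?_, ?_⟩
  · obtain rfl | hjl := eq_or_ne j l
    · simp
    · exact hmax j (Finset.mem_erase.2 ⟨hjl, hj⟩)
  · exact Polynomial.leadingCoeff_ne_zero.2 (sub_ne_zero.2 (hq.ne hmS hl hml))

theorem hasAsymptoticMultiplier_circleExp_logPolyPhase {β β' : ℝ} {p p' : ℝ[X]} {k : ℕ}
    (hk : (eulerDerivative β p - eulerDerivative β' p').natDegree ≤ k) (h : ℝ) :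
    HasAsymptoticMultiplier atTop (expDilation h k)
      ((fun x => Circle.exp (logPolyPhase β p x)) / fun x => Circle.exp (logPolyPhase β' p' x))
      (Circle.exp ((eulerDerivative β p - eulerDerivative β' p').coeff k * h)) := by
  rw [← eulerDerivative_sub] at hk ⊢
  refine ((Circle.exp.continuous.tendsto _).comp
    (tendsto_logPolyPhase_expDilation_sub hk h)).congr fun x => ?_
  simp only [Function.comp_apply, Pi.div_apply, logPolyPhase_sub, Circle.exp_sub]

theorem asymptoticallySeparated_circleExp_logPolyPhase {ι : Type*} {β : ι → ℝ} {p : ι → ℝ[X]}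
    {S : Finset ι} (hinj : Set.InjOn (fun j => eulerDerivative (β j) (p j)) S)
    (hS : S.Nontrivial) :
    AsymptoticallySeparated atTop (fun j x => Circle.exp (logPolyPhase (β j) (p j) x)) S := by
  obtain ⟨l, hl, m, hm, k, hk, hmk⟩ := exists_natDegree_sub_le_and_coeff_ne hinj hS
  set q := fun j => eulerDerivative (β j) (p j)
  -- With this `h` the multipliers of the `l`-th and `m`-th functions are `1` and `-1`.
  let h := Real.pi / (q m - q l).coeff k
  have hm_shift : (q m - q l).coeff k * h = Real.pi := mul_div_cancel₀ _ hmk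
  refine ⟨expDilation h k, _, fun j => Circle.exp ((q j - q l).coeff k * h),
    tendsto_expDilation_atTop h k,
    fun j hj => hasAsymptoticMultiplier_circleExp_logPolyPhase (hk j hj) h, l, hl, m, hm, ?_⟩
  simpa only [hm_shift, sub_self, Polynomial.coeff_zero, zero_mul, Circle.exp_zero] using
    Circle.exp_pi_ne_one.symm

theorem eq_zero_of_tendsto_sum_circleExp_logPolyPhase {ι : Type*} [Fintype ι] {c : ι → ℂ}
    {β : ι → ℝ} {p : ι → ℝ[X]} (hp₀ : ∀ j, (p j).eval 0 = 0)
    (hinj : Function.Injective fun j => (β j, p j))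
    (hsum : Tendsto (fun x => ∑ j, c j * Circle.exp (logPolyPhase (β j) (p j) x)) atTop (𝓝 0)) :
    c = 0 := by
  have hq : Function.Injective fun j => eulerDerivative (β j) (p j) := fun i j hij =>
    hinj (Prod.ext_iff.2 ((eulerDerivative_inj ((hp₀ i).trans (hp₀ j).symm)).1 hij))
  funext j
  exact eq_zero_of_tendsto_sum_of_asymptoticallySeparated
    (fun S hS => asymptoticallySeparated_circleExp_logPolyPhase hq.injOn hS)
    Finset.univ hsum j (Finset.mem_univ j)

theorem exists_seq_le_norm_of_not_tendsto_zero {α V : Type*} [TopologicalSpace α]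
    [FirstCountableTopology α] [SeminormedAddGroup V] {f : α → V} {t : Set α} {a : α}
    (hf : ¬ Tendsto f (𝓝[t] a) (𝓝 0)) :
    ∃ ε > 0, ∃ s : ℕ → α, (∀ i, s i ∈ t) ∧ Tendsto s atTop (𝓝 a) ∧ ∀ i, ε ≤ ‖f (s i)‖ := by
  simp only [NormedAddGroup.tendsto_nhds_zero, not_forall, not_eventually, not_lt] at hf
  obtain ⟨ε, hε, hfreq⟩ := hf
  obtain ⟨s, hs, hst⟩ :=
    exists_seq_forall_of_frequently (hfreq.and_eventually self_mem_nhdsWithin)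
  exact ⟨ε, hε, s, fun i => (hst i).2, (tendsto_nhdsWithin_iff.1 hs).1, fun i => (hst i).1⟩

theorem rpow_neg_cpow_mul_exp_eq_circleExp_logPolyPhase {d x : ℝ} (hd : d ≠ 0) (hx : 0 < x)
    (γ : ℝ) (p : ℝ[X]) :
    ((x ^ (-d) : ℝ) : ℂ) ^ (Complex.I * γ) *
        Complex.exp (Complex.I * (p.eval ((x ^ (-d)) ^ (-1 / d)) : ℝ)) =
      Circle.exp (logPolyPhase (-d * γ) p x) := by
  have hy : 0 < x ^ (-d) := Real.rpow_pos_of_pos hx _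
  have hroot : (x ^ (-d)) ^ (-1 / d) = x := by
    rw [← Real.rpow_mul hx.le, show -d * (-1 / d) = 1 by field_simp, Real.rpow_one]
  rw [hroot, Complex.cpow_def_of_ne_zero (Complex.ofReal_ne_zero.2 hy.ne'),
    ← Complex.ofReal_log hy.le, Real.log_rpow hx, ← Complex.exp_add, Circle.coe_exp, logPolyPhase]
  congr 1
  push_cast
  ring

theorem stmt_2_general {J : Type*} [Fintype J] {d : ℝ} (hd : 0 < d)
    (c : J → ℂ) (γ : J → ℝ) (φ : J → ℝ[X])
    (hφ0 : ∀ j, (φ j).eval 0 = 0)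
    (hdist : Function.Injective fun j => (γ j, φ j))
    (E : ℝ → ℂ)
    (hE : ∀ y : ℝ, 0 < y →
      E y = ∑ j, c j * (y : ℂ) ^ (Complex.I * (γ j : ℂ)) *
        Complex.exp (Complex.I * (((φ j).eval (y ^ (-1 / d)) : ℝ) : ℂ)))
    (hc : ∃ j, c j ≠ 0) :
    ∃ ε > 0, ∃ s : ℕ → ℝ, (∀ i, 0 < s i) ∧
      Tendsto s atTop (𝓝 0) ∧ ∀ i, ε ≤ ‖E (s i)‖ := by
  refine exists_seq_le_norm_of_not_tendsto_zero (t := Set.Ioi 0) fun hE₀ => ?_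
  have hinj : Function.Injective fun j => (-d * γ j, φ j) :=
    ((mul_right_injective₀ (neg_ne_zero.2 hd.ne')).prodMap Function.injective_id).comp hdist
  have hsubst : Tendsto (fun x : ℝ => x ^ (-d)) atTop (𝓝[>] 0) :=
    tendsto_nhdsWithin_iff.2 ⟨tendsto_rpow_neg_atTop hd,
      (eventually_gt_atTop 0).mono fun x hx => Real.rpow_pos_of_pos hx _⟩
  have hc₀ : c = 0 := by
    refine eq_zero_of_tendsto_sum_circleExp_logPolyPhase hφ0 hinj
      ((hE₀.comp hsubst).congr' ?_)
    filter_upwards [eventually_gt_atTop 0] with x hx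
    simp only [Function.comp_apply, hE _ (Real.rpow_pos_of_pos hx _), mul_assoc,
      rpow_neg_cpow_mul_exp_eq_circleExp_logPolyPhase hd.ne' hx]
  obtain ⟨j, hj⟩ := hc
  exact hj (congrFun hc₀ j)

/-- **Noncompensation, part 1.** For
`E(y) = ∑_{j∈J} c_j y^{iγ_j} e^{i φ_j(y^{-1/d})}` with pairwise distinct pairs `(γ_j, φ_j)`
(`φ_j(0) = 0`), if some `c_j ≠ 0` then there are `ε > 0` and a sequence of positive reals
tending to `0` on which `|E| ≥ ε`. -/
theorem stmt_2 {J : Type*} [Fintype J] (d : ℕ) (hd : 0 < d)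
    (c : J → ℂ) (γ : J → ℝ) (φ : J → Polynomial ℝ)
    (hφ0 : ∀ j, (φ j).eval 0 = 0)
    (hdist : Function.Injective fun j => (γ j, φ j))
    (E : ℝ → ℂ)
    (hE : ∀ y : ℝ, 0 < y →
      E y = ∑ j, c j * (y : ℂ) ^ (Complex.I * (γ j : ℂ)) *
        Complex.exp (Complex.I * (((φ j).eval (y ^ (-1 / (d : ℝ))) : ℝ) : ℂ)))
    (hc : ∃ j, c j ≠ 0) :
    ∃ ε > 0, ∃ s : ℕ → ℝ, (∀ i, 0 < s i) ∧
      Tendsto s atTop (nhds 0) ∧ ∀ i, ε ≤ ‖E (s i)‖ :=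
  stmt_2_general (Nat.cast_pos.2 hd) c γ φ hφ0 hdist E hE hc
end

section
/- Let J be a finite index set, let d be a positive integer, let (c_j)_{j∈J} be complex numbers, and let ((γ_j, φ_j))_{j∈J} be a family of pairwise distinct pairs where each γ_j ∈ ℝ and each φ_j is a real polynomial with φ_j(0) = 0. Define E : (0,∞) → ℂ by E(y) = ∑_{j∈J} c_j · y^{iγ_j} · e^{i φ_j(y^{−1/d})}. If there exists j ∈ J with c_j ≠ 0 and (γ_j, φ_j) ≠ (0, 0), then there exist ε > 0 and two sequences (s_i)_{i∈ℕ} and (t_i)_{i∈ℕ} of positive reals converging to 0 such that |E(s_i) − E(t_i)| ≥ ε for all i ∈ ℕ. -/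
open Filter

open scoped Topology Polynomial Asymptotics

/-!
In the variable `u = -(log y) / d` the function `E` becomes `∑ c_j exp (i ψ_j(u))` with
`ψ_j(u) = φ_j(e ^ u) - d γ_j u` and `u → ∞`. The derivative of a nonzero such phase `ψ` is a nonzero
polynomial in `e ^ u`, so it stays away from zero, and integration by parts shows that `exp (i ψ)`
is, up to a term tending to zero, the derivative of the bounded function `-i exp (i ψ) / ψ'`.
A nonzero constant `z` is not of this form, since its primitive would grow like `z u`.
If `E` had a limit `L` at zero, then
`c_k = (E - L) exp (-i ψ_k) + L exp (-i ψ_k) - ∑_{j ≠ k} c_j exp (i (ψ_j - ψ_k))`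
would be of this form, whence `c_k = 0`. So `E` has no limit, and Cauchy's criterion supplies the
two sequences.
-/

theorem exists_seq_le_dist_of_not_tendsto {α X : Type*} [PseudoMetricSpace X] [CompleteSpace X]
    {l : Filter α} [l.NeBot] [l.IsCountablyGenerated] {f : α → X}
    (hf : ¬ ∃ x, Tendsto f l (𝓝 x)) :
    ∃ ε > 0, ∃ s t : ℕ → α, Tendsto s atTop l ∧ Tendsto t atTop l ∧
      ∀ i, ε ≤ dist (f (s i)) (f (t i)) := by
  rw [← cauchy_map_iff_exists_tendsto, cauchy_map_iff',
    Metric.uniformity_basis_dist.tendsto_right_iff] at hf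
  push Not at hf
  obtain ⟨ε, hε, hfreq⟩ := hf
  obtain ⟨p, hp, hdist⟩ := exists_seq_forall_of_frequently hfreq
  exact ⟨ε, hε, fun i => (p i).1, fun i => (p i).2, tendsto_fst.comp hp, tendsto_snd.comp hp,
    fun i => by simpa using hdist i⟩

theorem isLittleO_id_atTop_of_tendsto_deriv_zero {V : Type*} [NormedAddCommGroup V]
    [NormedSpace ℝ V] {F F' : ℝ → V} (hF : ∀ᶠ u in atTop, HasDerivAt F (F' u) u)
    (hF' : Tendsto F' atTop (𝓝 0)) : F =o[atTop] (id : ℝ → ℝ) := by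
  refine Asymptotics.isLittleO_iff.2 fun ε hε => ?_
  have hsmall : ∀ᶠ u in atTop, ‖F' u‖ ≤ ε / 2 :=
    hF'.norm.eventually_le_const (by simpa using half_pos hε)
  obtain ⟨U, hU⟩ := eventually_atTop.1 ((hF.and hsmall).and (eventually_ge_atTop 0))
  have hconst : ∀ᶠ u : ℝ in atTop, ‖F U‖ ≤ ε / 2 * ‖u‖ :=
    Asymptotics.isLittleO_iff.1 (Asymptotics.isLittleO_const_id_atTop (F U)) (half_pos hε)
  filter_upwards [hconst, eventually_ge_atTop U] with u hu hUu
  have hU0 : 0 ≤ U := (hU U le_rfl).2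
  have hmean : ‖F u - F U‖ ≤ ε / 2 * ‖u - U‖ :=
    (convex_Ici U).norm_image_sub_le_of_norm_hasDerivWithin_le
      (fun x hx => (hU x hx).1.1.hasDerivWithinAt) (fun x hx => (hU x hx).1.2)
      Set.self_mem_Ici hUu
  have hlength : ‖u - U‖ ≤ ‖u‖ := by
    rw [Real.norm_of_nonneg (sub_nonneg.2 hUu), Real.norm_of_nonneg (hU0.trans hUu)]
    exact sub_le_self u hU0
  calc ‖F u‖ ≤ ‖F U‖ + ‖F u - F U‖ := norm_le_norm_add_norm_sub' _ _
    _ ≤ ε / 2 * ‖u‖ + ε / 2 * ‖u‖ := by gcongr; exact hmean.trans (by gcongr)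
    _ = ε * ‖id u‖ := by rw [id]; ring

/-- The unimodular function `exp (i ψ)` with real phase `ψ`, the building block of `E`. -/
noncomputable def wave (ψ : ℝ → ℝ) (u : ℝ) : ℂ :=
  Complex.exp (Complex.I * ψ u)

theorem norm_wave (ψ : ℝ → ℝ) (u : ℝ) : ‖wave ψ u‖ = 1 :=
  Complex.norm_exp_I_mul_ofReal _

theorem wave_sub (ψ θ : ℝ → ℝ) (u : ℝ) : wave (ψ - θ) u = wave ψ u * wave (-θ) u := by
  simp only [wave, ← Complex.exp_add, Pi.sub_apply, Pi.neg_apply]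
  push_cast
  ring_nf

/-- The functions `ℝ → ℂ` which, near `+∞`, are derivatives of bounded functions up to an error
tending to zero. For locally integrable functions this implies that the mean over `[0, T]` tends to
zero as `T → ∞`; the condition replaces vanishing mean and avoids integrals. -/
def oscillating : Submodule ℂ (ℝ → ℂ) where
  carrier := {f | ∃ G r : ℝ → ℂ, G =O[atTop] (fun _ => (1 : ℝ)) ∧ Tendsto r atTop (𝓝 0) ∧
    ∀ᶠ u in atTop, HasDerivAt G (f u - r u) u}
  zero_mem' := ⟨0, 0, Asymptotics.isBigO_zero _ _, tendsto_const_nhds, by simp⟩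
  add_mem' := by
    rintro f g ⟨F, r, hF, hr, hFf⟩ ⟨G, q, hG, hq, hGg⟩
    refine ⟨F + G, fun u => r u + q u, hF.add hG, by simpa using hr.add hq, ?_⟩
    filter_upwards [hFf, hGg] with u hFu hGu
    exact (hFu.add hGu).congr_deriv (sub_add_sub_comm ..)
  smul_mem' := by
    rintro c f ⟨F, r, hF, hr, hFf⟩
    refine ⟨c • F, fun u => c • r u, hF.const_smul_left c, by simpa using hr.const_smul c, ?_⟩
    filter_upwards [hFf] with u hFu
    exact (hFu.const_smul c).congr_deriv (smul_sub ..)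

namespace oscillating

theorem mem_of_tendsto_zero {f : ℝ → ℂ} (hf : Tendsto f atTop (𝓝 0)) : f ∈ oscillating :=
  ⟨0, f, Asymptotics.isBigO_zero _ _, hf, by simp⟩

theorem eq_zero_of_const_mem {z : ℂ} (hz : (fun _ => z) ∈ oscillating) : z = 0 := by
  obtain ⟨G, r, hG, hr, hGz⟩ := hz
  have hdrift : (fun u : ℝ => G u - u • z) =o[atTop] (id : ℝ → ℝ) := by
    refine isLittleO_id_atTop_of_tendsto_deriv_zero (F' := fun u => -r u) ?_ (by simpa using hr.neg)
    filter_upwards [hGz] with u hGu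
    exact (hGu.sub ((hasDerivAt_id u).smul_const z)).congr_deriv (by simp)
  have hG_sublinear : G =o[atTop] (id : ℝ → ℝ) :=
    hG.trans_isLittleO (Asymptotics.isLittleO_const_id_atTop (1 : ℝ))
  have hlinear : (fun u : ℝ => u • z) =o[atTop] (id : ℝ → ℝ) := by
    simpa only [sub_sub_cancel] using hG_sublinear.sub hdrift
  refine tendsto_nhds_unique (tendsto_const_nhds.congr' ?_) hlinear.tendsto_inv_smul_nhds_zero
  filter_upwards [eventually_ne_atTop 0] with u hu
  exact (inv_smul_smul₀ hu z).symm

theorem wave_mem {ψ ω ω' : ℝ → ℝ} (hψ : ∀ᶠ u in atTop, HasDerivAt ψ (ω u) u)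
    (hω : ∀ᶠ u in atTop, HasDerivAt ω (ω' u) u) (hbelow : (fun _ => (1 : ℝ)) =O[atTop] ω)
    (hω' : ω' =o[atTop] fun u => ω u ^ 2) : wave ψ ∈ oscillating := by
  have hne : ∀ᶠ u in atTop, ω u ≠ 0 :=
    hbelow.eq_zero_imp.mono fun u hu h0 => one_ne_zero (hu h0)
  have hinv : (fun u => (ω u)⁻¹) =O[atTop] (fun _ => (1 : ℝ)) := by
    simpa only [inv_one] using hbelow.inv_rev (by simp)
  refine ⟨fun u => -Complex.I * (wave ψ u / ω u),
    fun u => -Complex.I * wave ψ u * (ω' u / ω u ^ 2 : ℝ), ?_, ?_, ?_⟩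
  · refine .trans (.of_norm_le fun u => ?_) hinv.norm_left
    simp [norm_wave]
  · rw [tendsto_zero_iff_norm_tendsto_zero]
    simpa [norm_wave] using hω'.tendsto_div_nhds_zero.norm
  · filter_upwards [hψ, hω, hne] with u hψu hωu hne
    have hwave : HasDerivAt (wave ψ) (wave ψ u * (Complex.I * ω u)) u :=
      (hψu.ofReal_comp.const_mul Complex.I).cexp
    have hne' : (ω u : ℂ) ≠ 0 := by exact_mod_cast hne
    refine ((hwave.div hωu.ofReal_comp hne').const_mul (-Complex.I)).congr_deriv ?_
    push_cast
    field_simp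
    linear_combination (-wave ψ u * (ω u : ℂ) ^ 2) * Complex.I_sq

theorem coeff_eq_zero_of_tendsto_sum {J : Type*} [Fintype J] {c : J → ℂ} {ψ : J → ℝ → ℝ} {L : ℂ}
    (hL : Tendsto (fun u => ∑ j, c j * wave (ψ j) u) atTop (𝓝 L)) {k : J}
    (hk : wave (-ψ k) ∈ oscillating) (hjk : ∀ j ≠ k, wave (ψ j - ψ k) ∈ oscillating) :
    c k = 0 := by
  classical
  have hremainder : Tendsto (fun u => (∑ j, c j * wave (ψ j) u - L) * wave (-ψ k) u)
      atTop (𝓝 0) := by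
    rw [tendsto_zero_iff_norm_tendsto_zero]
    simpa [norm_wave] using (hL.sub_const L).norm
  have hothers : ∑ j ∈ Finset.univ.erase k, c j • wave (ψ j - ψ k) ∈ oscillating :=
    sum_mem fun j hj => oscillating.smul_mem _ (hjk j (Finset.ne_of_mem_erase hj))
  have hself (u : ℝ) : wave (ψ k) u * wave (-ψ k) u = 1 := by
    rw [← wave_sub, sub_self]
    simp [wave]
  apply eq_zero_of_const_mem
  convert sub_mem (add_mem (mem_of_tendsto_zero hremainder) (oscillating.smul_mem L hk)) hothers
    using 1
  ext u
  simp only [Pi.sub_apply, Pi.add_apply, Pi.smul_apply, Finset.sum_apply, smul_eq_mul, wave_sub,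
    ← mul_assoc, ← Finset.sum_mul]
  rw [← Finset.add_sum_erase _ _ (Finset.mem_univ k)]
  linear_combination (-c k) * hself u

end oscillating

section ExpPhase

open Polynomial

theorem X_mul_derivative_add_C_ne_zero {R : Type*} [Semiring R] [IsAddTorsionFree R] {a : R}
    {P : R[X]} (hP : P.eval 0 = 0) (h : (a, P) ≠ 0) : X * P.derivative + C a ≠ 0 := by
  intro hQ
  have ha : a = 0 := by simpa using congrArg (coeff · 0) hQ
  have hderiv : P.derivative = 0 := by
    rwa [ha, map_zero, add_zero, isRegular_X.left.mul_left_eq_zero_iff] at hQ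
  have hP0 : P = 0 := by
    rw [eq_C_of_derivative_eq_zero hderiv, coeff_zero_eq_eval_zero, hP, map_zero]
  exact h (Prod.ext ha hP0)

theorem degree_X_mul_derivative_lt_degree_sq {R : Type*} [Semiring R] [NoZeroDivisors R]
    {Q : R[X]} (hQ : Q ≠ 0) : (X * Q.derivative).degree < (Q ^ 2).degree := by
  have hsq : Q ^ 2 ≠ 0 := pow_ne_zero 2 hQ
  rcases eq_or_ne Q.natDegree 0 with hconst | hconst
  · rw [derivative_of_natDegree_zero hconst, mul_zero, degree_zero]
    exact bot_lt_iff_ne_bot.2 (degree_ne_bot.2 hsq)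
  · refine degree_lt_degree ?_
    have hmul : (X * Q.derivative).natDegree ≤ 1 + Q.derivative.natDegree :=
      natDegree_mul_le_of_le natDegree_X_le le_rfl
    have hderiv := natDegree_derivative_lt hconst
    rw [natDegree_pow]
    omega

theorem hasDerivAt_eval_exp (P : ℝ[X]) (u : ℝ) :
    HasDerivAt (fun v => P.eval (Real.exp v)) ((X * P.derivative).eval (Real.exp u)) u :=
  ((P.hasDerivAt _).comp u (Real.hasDerivAt_exp u)).congr_deriv (by simp [mul_comm])

theorem one_isBigO_eval_exp {Q : ℝ[X]} (hQ : Q ≠ 0) :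
    (fun _ => (1 : ℝ)) =O[atTop] fun u => Q.eval (Real.exp u) := by
  have hdegree : (1 : ℝ[X]).degree ≤ Q.degree := degree_one_le.trans (zero_le_degree_iff.2 hQ)
  simpa only [Function.comp_def, eval_one] using
    (isBigO_atTop_of_degree_le _ _ hdegree).comp_tendsto Real.tendsto_exp_atTop

theorem deriv_eval_exp_isLittleO_sq {Q : ℝ[X]} (hQ : Q ≠ 0) :
    (fun u => (X * Q.derivative).eval (Real.exp u)) =o[atTop] fun u => Q.eval (Real.exp u) ^ 2 := by
  simpa only [Function.comp_def, eval_pow] using (isLittleO_atTop_of_degree_lt _ _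
    (degree_X_mul_derivative_lt_degree_sq hQ)).comp_tendsto Real.tendsto_exp_atTop

/-- The phase `P(e ^ u) + a u` attached to a pair `(a, P)`. In the variable `u = -(log y) / d` the
term of `E` with parameters `(γ, φ)` has the phase of the pair `(-d γ, φ)`. -/
noncomputable def expPhase (p : ℝ × ℝ[X]) (u : ℝ) : ℝ :=
  p.2.eval (Real.exp u) + p.1 * u

theorem expPhase_neg (p : ℝ × ℝ[X]) : expPhase (-p) = -expPhase p := by
  ext u
  simp only [expPhase, Prod.fst_neg, Prod.snd_neg, eval_neg, Pi.neg_apply]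
  ring

theorem expPhase_sub (p q : ℝ × ℝ[X]) : expPhase (p - q) = expPhase p - expPhase q := by
  ext u
  simp only [expPhase, Prod.fst_sub, Prod.snd_sub, eval_sub, Pi.sub_apply]
  ring

theorem hasDerivAt_expPhase (p : ℝ × ℝ[X]) (u : ℝ) :
    HasDerivAt (expPhase p) ((X * p.2.derivative + C p.1).eval (Real.exp u)) u :=
  ((hasDerivAt_eval_exp p.2 u).add ((hasDerivAt_id u).const_mul p.1)).congr_deriv (by simp)

theorem wave_expPhase_mem_oscillating {p : ℝ × ℝ[X]} (hp : p ≠ 0) (hp0 : p.2.eval 0 = 0) :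
    wave (expPhase p) ∈ oscillating := by
  have hQ : X * p.2.derivative + C p.1 ≠ 0 := X_mul_derivative_add_C_ne_zero hp0 hp
  exact oscillating.wave_mem (.of_forall (hasDerivAt_expPhase p))
    (.of_forall (hasDerivAt_eval_exp _)) (one_isBigO_eval_exp hQ) (deriv_eval_exp_isLittleO_sq hQ)

theorem not_tendsto_sum_wave_expPhase {J : Type*} [Fintype J] {c : J → ℂ} {p : J → ℝ × ℝ[X]}
    (hp : Function.Injective p) (hp0 : ∀ j, (p j).2.eval 0 = 0) {k : J} (hck : c k ≠ 0)
    (hpk : p k ≠ 0) :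
    ¬ ∃ L, Tendsto (fun u => ∑ j, c j * wave (expPhase (p j)) u) atTop (𝓝 L) := by
  rintro ⟨L, hL⟩
  refine hck (oscillating.coeff_eq_zero_of_tendsto_sum hL ?_ fun j hj => ?_)
  · rw [← expPhase_neg]
    exact wave_expPhase_mem_oscillating (neg_ne_zero.2 hpk) (by simp [hp0])
  · rw [← expPhase_sub]
    exact wave_expPhase_mem_oscillating (sub_ne_zero.2 (hp.ne hj)) (by simp [hp0])

end ExpPhase

theorem cpow_mul_cexp_eval_rpow_exp_neg {d : ℝ} (hd : d ≠ 0) (γ : ℝ) (P : ℝ[X]) (u : ℝ) :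
    (Real.exp (-(d * u)) : ℂ) ^ (Complex.I * (γ : ℂ)) *
      Complex.exp (Complex.I * ((P.eval (Real.exp (-(d * u)) ^ (-1 / d)) : ℝ) : ℂ)) =
      wave (expPhase (-(d * γ), P)) u := by
  have hrpow : Real.exp (-(d * u)) ^ (-1 / d) = Real.exp u := by
    rw [← Real.exp_mul]
    field_simp
  have hlog : Complex.log (Real.exp (-(d * u))) = -(d * u) := by
    rw [← Complex.ofReal_log (Real.exp_pos _).le, Real.log_exp]
    push_cast
    rfl
  rw [hrpow, Complex.cpow_def_of_ne_zero (by exact_mod_cast (Real.exp_pos _).ne'), hlog,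
    ← Complex.exp_add, wave, expPhase]
  push_cast
  ring_nf

theorem stmt_3_general {J : Type*} [Fintype J] (d : ℝ) (hd : 0 < d)
    (c : J → ℂ) (γ : J → ℝ) (φ : J → Polynomial ℝ)
    (hφ0 : ∀ j, (φ j).eval 0 = 0)
    (hdist : Function.Injective fun j => (γ j, φ j))
    (E : ℝ → ℂ)
    (hE : ∀ y : ℝ, 0 < y →
      E y = ∑ j, c j * (y : ℂ) ^ (Complex.I * (γ j : ℂ)) *
        Complex.exp (Complex.I * (((φ j).eval (y ^ (-1 / d)) : ℝ) : ℂ)))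
    (hc : ∃ j, c j ≠ 0 ∧ (γ j, φ j) ≠ (0, 0)) :
    ∃ ε > 0, ∃ s t : ℕ → ℝ, (∀ i, 0 < s i) ∧ (∀ i, 0 < t i) ∧
      Tendsto s atTop (nhds 0) ∧ Tendsto t atTop (nhds 0) ∧
      ∀ i, ε ≤ ‖E (s i) - E (t i)‖ := by
  obtain ⟨k, hck, hk⟩ := hc
  let y : ℝ → ℝ := fun u => Real.exp (-(d * u))
  have hy : Tendsto y atTop (𝓝 0) :=
    Real.tendsto_exp_neg_atTop_nhds_zero.comp (tendsto_id.const_mul_atTop hd)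
  have hEy (u : ℝ) : E (y u) = ∑ j, c j * wave (expPhase (-(d * γ j), φ j)) u := by
    simp only [hE _ (Real.exp_pos _), y, mul_assoc, ← cpow_mul_cexp_eval_rpow_exp_neg hd.ne']
  have hinj : Function.Injective fun j => (-(d * γ j), φ j) := fun i j hij =>
    hdist (by simpa [hd.ne'] using hij)
  have hlim := not_tendsto_sum_wave_expPhase hinj hφ0 hck (by simpa [hd.ne'] using hk)
  obtain ⟨ε, hε, s, t, hs, ht, hst⟩ := exists_seq_le_dist_of_not_tendsto hlim
  exact ⟨ε, hε, y ∘ s, y ∘ t, fun _ => Real.exp_pos _, fun _ => Real.exp_pos _, hy.comp hs,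
    hy.comp ht, fun i => by simpa only [Function.comp_apply, hEy, dist_eq_norm] using hst i⟩

/-- **Noncompensation, part 2.** For
`E(y) = ∑_{j∈J} c_j y^{iγ_j} e^{i φ_j(y^{-1/d})}` with pairwise distinct pairs `(γ_j, φ_j)`
(`φ_j(0) = 0`), if some `j` has `c_j ≠ 0` and `(γ_j, φ_j) ≠ (0, 0)`, then there are `ε > 0`
and two sequences of positive reals tending to `0` with `|E(s_i) - E(t_i)| ≥ ε` for all `i`. -/
theorem stmt_3 {J : Type*} [Fintype J] (d : ℕ) (hd : 0 < d)
    (c : J → ℂ) (γ : J → ℝ) (φ : J → Polynomial ℝ)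
    (hφ0 : ∀ j, (φ j).eval 0 = 0)
    (hdist : Function.Injective fun j => (γ j, φ j))
    (E : ℝ → ℂ)
    (hE : ∀ y : ℝ, 0 < y →
      E y = ∑ j, c j * (y : ℂ) ^ (Complex.I * (γ j : ℂ)) *
        Complex.exp (Complex.I * (((φ j).eval (y ^ (-1 / (d : ℝ))) : ℝ) : ℂ)))
    (hc : ∃ j, c j ≠ 0 ∧ (γ j, φ j) ≠ (0, 0)) :
    ∃ ε > 0, ∃ s t : ℕ → ℝ, (∀ i, 0 < s i) ∧ (∀ i, 0 < t i) ∧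
      Tendsto s atTop (nhds 0) ∧ Tendsto t atTop (nhds 0) ∧
      ∀ i, ε ≤ ‖E (s i) - E (t i)‖ := by
  exact stmt_3_general d (Nat.cast_pos.2 hd) c γ φ hφ0 hdist E hE hc
end

section
/- Let m ≥ 1, let Γ be a finite subset of ℂ^m, let S be a finite subset of ℕ^m, and let (c_{r,s})_{(r,s) ∈ (Γ+ℕ^m) × S} be complex coefficients indexed by the set (Γ+ℕ^m) × S, where Γ+ℕ^m = {γ + α : γ ∈ Γ, α ∈ ℕ^m} ⊆ ℂ^m. Suppose that for every x = (x_1,…,x_m) ∈ (0,1)^m the family ((r,s) ↦ c_{r,s} · x^r · (log x)^s) is summable, where x^r = ∏_{i=1}^m x_i^{r_i} and (log x)^s = ∏_{i=1}^m (log x_i)^{s_i}, and define f(x) to be its sum. Then f(x) = 0 for all x ∈ (0,1)^m if and only if c_{r,s} = 0 for all (r,s) ∈ (Γ+ℕ^m) × S. -/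
/-!
On a ray `x i = exp (u * t i)` with all `t i < 0`, the series becomes
`∑ r, P r (u) * exp (u * ⟨t, r⟩)` with polynomials `P r`, a Dirichlet series whose exponents have
real parts tending to `-∞`. For almost every `t` the exponents `⟨t, r⟩` are pairwise distinct, as
`t` avoids countably many proper subspaces. Dividing by the largest `exp (u * μ)` that occurs
leaves a finite sum `∑ P r (u) * exp (i * u * θ r)` tending to `0`, and dividing by its largest
power of `u` leaves one with constant coefficients. A limit of its translates vanishes identically,
so independence of characters kills the leading coefficients. Hence every `P r` is zero. Now
`P r (1)` is the polynomial with coefficients `c r s` evaluated at `t`, so that polynomial vanishes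
on a dense subset of the negative orthant, and `c r s = 0`.
-/

open Complex Filter Topology Polynomial

theorem linearIndependent_cexp_ofReal_mul :
    LinearIndependent ℂ (fun (z : ℂ) (v : ℝ) => exp (v * z)) := by
  let character (z : ℂ) : Multiplicative ℝ →* ℂ :=
    { toFun := fun v => exp (v.toAdd * z)
      map_one' := by simp
      map_mul' := fun v w => by simp [add_mul, exp_add] }
  have hasDerivAt_zero (z : ℂ) : HasDerivAt (fun v : ℝ => exp (v * z)) z 0 := by
    simpa using ((hasDerivAt_id (0 : ℝ)).ofReal_comp.mul_const z).cexp
  have character_injective : Function.Injective character := fun z w hzw => by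
    have heq : (fun v : ℝ => exp (v * z)) = fun v : ℝ => exp (v * w) :=
      funext fun v => DFunLike.congr_fun hzw (Multiplicative.ofAdd v)
    exact (hasDerivAt_zero z).unique (heq ▸ hasDerivAt_zero w)
  exact (linearIndependent_monoidHom (Multiplicative ℝ) ℂ).comp character character_injective

section ExponentialSums

variable {κ : Type*} {F : Finset κ} {θ : κ → ℝ}

theorem eq_zero_of_tendsto_sum_mul_cexp (hθ : Set.InjOn θ F) {a : κ → ℂ}
    (h : Tendsto (fun u : ℝ => ∑ k ∈ F, a k * exp (u * (θ k * I))) atTop (𝓝 0)) :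
    ∀ k ∈ F, a k = 0 := by
  -- The phases lie in a compact torus, hence converge along an ultrafilter finer than `atTop`.
  let U : Ultrafilter ℝ := Ultrafilter.of atTop
  let z : ℝ → κ → Circle := fun u k => Circle.exp (u * θ k)
  let zlim : κ → Circle := (U.map z).lim
  have hz (k : κ) : Tendsto (fun u => (z u k : ℂ)) U (𝓝 (zlim k)) :=
    (continuous_subtype_val.tendsto _).comp
      (((continuous_apply k).tendsto zlim).comp (U.map z).le_nhds_lim)
  have sum_zlim (v : ℝ) : ∑ k ∈ F, a k * zlim k * exp (v * (θ k * I)) = 0 := by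
    have hshift : Tendsto (fun u : ℝ => ∑ k ∈ F, a k * z u k * exp (v * (θ k * I))) U (𝓝 0) := by
      refine ((h.comp (tendsto_atTop_add_const_right _ v tendsto_id)).congr fun u => ?_).mono_left
        (Ultrafilter.of_le atTop)
      refine Finset.sum_congr rfl fun k _ => ?_
      simp only [id_eq, z, Circle.coe_exp, mul_assoc, ← exp_add]
      push_cast
      ring_nf
    exact tendsto_nhds_unique
      (tendsto_finsetSum F fun k _ => ((hz k).const_mul (a k)).mul_const _) hshift
  have hindep : LinearIndepOn ℂ (fun (k : κ) (v : ℝ) => exp (v * (θ k * I))) F :=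
    linearIndependent_cexp_ofReal_mul.comp (fun k : F => (θ k * I : ℂ)) fun j k hjk =>
      Subtype.ext (hθ j.2 k.2 (by simpa using hjk))
  intro k hk
  have hk0 := linearIndepOn_finset_iff.mp hindep (fun k => a k * zlim k)
    (funext fun v => by simpa using sum_zlim v) k hk
  exact (mul_eq_zero.mp hk0).resolve_right (zlim k).coe_ne_zero

theorem tendsto_eval_div_pow_atTop {P : ℂ[X]} {N : ℕ} (hP : P.natDegree ≤ N) :
    Tendsto (fun u : ℝ => P.eval (u : ℂ) / u ^ N) atTop (𝓝 (P.coeff N)) := by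
  have hinv : Tendsto (fun u : ℝ => ((u⁻¹ : ℝ) : ℂ)) atTop (𝓝 0) :=
    (continuous_ofReal.tendsto' 0 0 ofReal_zero).comp tendsto_inv_atTop_zero
  have hreflect : Tendsto (fun u : ℝ => (P.reflect N).eval ((u⁻¹ : ℝ) : ℂ)) atTop
      (𝓝 (P.coeff N)) := by
    have heval : (P.reflect N).eval 0 = P.coeff N := by
      rw [← coeff_zero_eq_eval_zero, coeff_reflect, revAt_zero]
    exact heval ▸ ((P.reflect N).continuous.tendsto 0).comp hinv
  refine hreflect.congr' ?_
  filter_upwards [eventually_ne_atTop 0] with u hu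
  have hu' : (u : ℂ) ≠ 0 := ofReal_ne_zero.mpr hu
  let _ := invertibleOfNonzero hu'
  rw [eq_div_iff (pow_ne_zero N hu'), ofReal_inv, ← invOf_eq_inv]
  exact eval₂_reflect_mul_pow (RingHom.id ℂ) (u : ℂ) N P hP

theorem coeff_eq_zero_of_tendsto_sum_eval_mul_cexp (hθ : Set.InjOn θ F) {P : κ → ℂ[X]} {N : ℕ}
    (hP : ∀ k ∈ F, (P k).natDegree ≤ N)
    (h : Tendsto (fun u : ℝ => ∑ k ∈ F, (P k).eval (u : ℂ) * exp (u * (θ k * I))) atTop (𝓝 0)) :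
    ∀ k ∈ F, (P k).coeff N = 0 := by
  refine eq_zero_of_tendsto_sum_mul_cexp hθ ?_
  have hscaled : Tendsto (fun u : ℝ =>
      ∑ k ∈ F, (P k).eval (u : ℂ) / u ^ N * exp (u * (θ k * I))) atTop (𝓝 0) := by
    refine squeeze_zero_norm' ?_ (tendsto_zero_iff_norm_tendsto_zero.mp h)
    filter_upwards [eventually_ge_atTop 1] with u hu
    simp_rw [div_mul_eq_mul_div, ← Finset.sum_div]
    rw [norm_div, norm_pow, norm_real, Real.norm_of_nonneg (by positivity)]
    exact div_le_self (norm_nonneg _) (one_le_pow₀ hu)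
  have herror : Tendsto (fun u : ℝ =>
      ∑ k ∈ F, ((P k).coeff N - (P k).eval (u : ℂ) / u ^ N) * exp (u * (θ k * I)))
      atTop (𝓝 0) := by
    rw [← Finset.sum_const_zero (s := F)]
    refine tendsto_finsetSum F fun k hk => ?_
    have hcoeff := (tendsto_eval_div_pow_atTop (hP k hk)).const_sub ((P k).coeff N)
    rw [sub_self] at hcoeff
    refine squeeze_zero_norm (fun u => ?_) (tendsto_zero_iff_norm_tendsto_zero.mp hcoeff)
    simp [norm_exp]
  refine (add_zero (0 : ℂ) ▸ hscaled.add herror).congr fun u => ?_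
  rw [← Finset.sum_add_distrib]
  exact Finset.sum_congr rfl fun k _ => by ring

theorem eq_zero_of_tendsto_sum_eval_mul_cexp (hθ : Set.InjOn θ F) {P : κ → ℂ[X]}
    (h : Tendsto (fun u : ℝ => ∑ k ∈ F, (P k).eval (u : ℂ) * exp (u * (θ k * I))) atTop (𝓝 0)) :
    ∀ k ∈ F, P k = 0 := by
  intro k hk
  obtain ⟨j, hj, hmax⟩ := F.exists_max_image (fun k => (P k).degree) ⟨k, hk⟩
  have hlead : (P j).leadingCoeff = 0 :=
    coeff_eq_zero_of_tendsto_sum_eval_mul_cexp hθ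
      (fun k hk => natDegree_le_natDegree (hmax k hk)) h j hj
  have hdeg := hmax k hk
  rwa [leadingCoeff_eq_zero.mp hlead, degree_zero, le_bot_iff, degree_eq_bot] at hdeg

end ExponentialSums

section DirichletSeries

variable {κ : Type*} {z : κ → ℂ}

theorem norm_sum_le_tsum_of_hasSum_zero {E : Type*} [NormedAddCommGroup E] {f : κ → E} {g : κ → ℝ}
    {F : Finset κ} (hf : HasSum f 0) (hg : Summable g) (hg0 : ∀ k, 0 ≤ g k)
    (hfg : ∀ k ∉ F, ‖f k‖ ≤ g k) : ‖∑ k ∈ F, f k‖ ≤ ∑' k, g k := by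
  have hcompl : HasSum (fun k : {k // k ∉ F} => f k) (-∑ k ∈ F, f k) :=
    F.hasSum_compl_iff.mpr (by simpa using hf)
  calc ‖∑ k ∈ F, f k‖ = ‖-∑ k ∈ F, f k‖ := (norm_neg _).symm
    _ ≤ ∑' k : {k // k ∉ F}, g k :=
      hcompl.norm_le_of_bounded (hg.subtype _).hasSum fun k => hfg k k.2
    _ ≤ ∑' k, g k := hg.tsum_subtype_le g {k | k ∉ F} hg0

theorem norm_mul_cexp_sub_le {w ζ : ℂ} {u M B : ℝ} {N : ℕ} (μ : ℝ) (hu : 1 ≤ u)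
    (hw : ‖w‖ ≤ M * u ^ N) (hζ : ζ.re ≤ B) :
    ‖w * exp (u * (ζ - μ))‖ ≤
      u ^ N * Real.exp (-(μ - B) * u) * (Real.exp (-B) * (M * Real.exp ζ.re)) := by
  have hexp : (u * (ζ - μ)).re ≤ -(μ - B) * u + (-B + ζ.re) := by
    simp only [re_ofReal_mul, sub_re, ofReal_re]
    nlinarith [mul_nonneg (sub_nonneg.mpr hu) (sub_nonneg.mpr hζ)]
  calc ‖w * exp (u * (ζ - μ))‖ ≤ M * u ^ N * Real.exp (-(μ - B) * u + (-B + ζ.re)) := by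
        rw [norm_mul, norm_exp]
        exact mul_le_mul hw (Real.exp_le_exp.mpr hexp) (Real.exp_nonneg _)
          ((norm_nonneg w).trans hw)
    _ = _ := by rw [Real.exp_add, Real.exp_add]; ring

theorem tendsto_sum_mul_cexp_of_hasSum_zero {p : κ → ℝ → ℂ} {M : κ → ℝ} {N : ℕ}
    (hp : ∀ k, ∀ u : ℝ, 1 ≤ u → ‖p k u‖ ≤ M k * u ^ N)
    (hM : Summable fun k => M k * Real.exp (z k).re)
    (hs : ∀ u : ℝ, 1 ≤ u → HasSum (fun k => p k u * exp (u * z k)) 0)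
    {F : Finset κ} {B μ : ℝ} (hB : B < μ) (hF : ∀ k ∉ F, B < (z k).re → p k = 0) :
    Tendsto (fun u : ℝ => ∑ k ∈ F, p k u * exp (u * (z k - μ))) atTop (𝓝 0) := by
  let tail (u : ℝ) (k : κ) : ℝ :=
    u ^ N * Real.exp (-(μ - B) * u) * (Real.exp (-B) * (M k * Real.exp (z k).re))
  have hM0 (k : κ) : 0 ≤ M k := by simpa using (norm_nonneg _).trans (hp k 1 le_rfl)
  have hbound : ∀ᶠ u : ℝ in atTop,
      ‖∑ k ∈ F, p k u * exp (u * (z k - μ))‖ ≤ ∑' k, tail u k := by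
    filter_upwards [eventually_ge_atTop 1] with u hu
    have hshift : HasSum (fun k => p k u * exp (u * (z k - μ))) 0 := by
      refine (mul_zero (exp (-(u * μ))) ▸ (hs u hu).mul_left _).congr_fun fun k => ?_
      rw [mul_left_comm, ← exp_add]
      ring_nf
    have htail0 (k : κ) : 0 ≤ tail u k := by have := hM0 k; positivity
    refine norm_sum_le_tsum_of_hasSum_zero hshift ((hM.mul_left _).mul_left _) htail0 ?_
    intro k hk
    rcases le_or_gt (z k).re B with hkB | hkB
    · exact norm_mul_cexp_sub_le μ hu (hp k u hu) hkB
    · simpa [hF k hk hkB] using htail0 k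
  refine squeeze_zero_norm' hbound ?_
  simp only [tail, tsum_mul_left]
  simpa using (tendsto_rpow_mul_exp_neg_mul_atTop_nhds_zero N (μ - B) (sub_pos.mpr hB)).mul_const
    (Real.exp (-B) * ∑' k, M k * Real.exp (z k).re)

theorem exists_lt_forall_le_of_tendsto_cofinite_atBot {f : κ → ℝ} (hf : Tendsto f cofinite atBot)
    (μ : ℝ) : ∃ B < μ, ∀ k, f k < μ → f k ≤ B := by
  rcases {k | f k < μ}.eq_empty_or_nonempty with hempty | hne
  · exact ⟨μ - 1, sub_one_lt μ, fun k hk => absurd hk (Set.eq_empty_iff_forall_notMem.mp hempty k)⟩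
  · obtain ⟨j, hj, hmax⟩ := hf.exists_within_forall_ge hne
    exact ⟨f j, hj, hmax⟩

theorem countable_of_tendsto_cofinite_atTop {f : κ → ℝ} (hf : Tendsto f cofinite atTop) :
    Countable κ := by
  refine Set.countable_univ_iff.mp <| (Set.countable_iUnion fun n : ℕ =>
    (hf.eventually_gt_atTop (n : ℝ)).countable).mono fun k _ => Set.mem_iUnion.mpr ?_
  simpa using exists_nat_ge (f k)

theorem eq_zero_of_hasSum_eval_mul_cexp (hz : Function.Injective z)
    (hre : Tendsto (fun k => (z k).re) cofinite atBot) {P : κ → ℂ[X]} {M : κ → ℝ} {N : ℕ}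
    (hP : ∀ k, ∀ u : ℝ, 1 ≤ u → ‖(P k).eval (u : ℂ)‖ ≤ M k * u ^ N)
    (hM : Summable fun k => M k * Real.exp (z k).re)
    (hs : ∀ u : ℝ, 1 ≤ u → HasSum (fun k => (P k).eval (u : ℂ) * exp (u * z k)) 0) :
    ∀ k, P k = 0 := by
  by_contra! hne
  obtain ⟨j, hj, hmax⟩ := hre.exists_within_forall_ge (s := {k | P k ≠ 0}) hne
  let μ := (z j).re
  obtain ⟨B, hBμ, hB⟩ := exists_lt_forall_le_of_tendsto_cofinite_atBot hre μ
  have hfinite : {k | (z k).re = μ}.Finite :=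
    (hre.eventually_lt_atBot μ).subset fun k hk => by simp [hk.not_lt]
  let F := hfinite.toFinset
  have hF {k : κ} : k ∈ F ↔ (z k).re = μ := hfinite.mem_toFinset
  have hlead : Tendsto (fun u : ℝ => ∑ k ∈ F, (P k).eval (u : ℂ) * exp (u * (z k - μ)))
      atTop (𝓝 0) := by
    refine tendsto_sum_mul_cexp_of_hasSum_zero hP hM hs hBμ fun k hkF hBk => ?_
    have hPk : P k = 0 := by
      by_contra hPk
      exact hBk.not_ge (hB k ((hmax k hPk).lt_of_ne (mt hF.mpr hkF)))
    simp [hPk, Pi.zero_def]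
  refine hj (eq_zero_of_tendsto_sum_eval_mul_cexp (θ := fun k => (z k).im) ?_
    (hlead.congr fun u => Finset.sum_congr rfl fun k hk => ?_) j (hF.mpr rfl))
  · exact fun k hk l hl hkl => hz (Complex.ext ((hF.mp hk).trans (hF.mp hl).symm) hkl)
  · have hzk : z k - μ = (z k).im * I := by
      rw [sub_eq_iff_eq_add', ← hF.mp hk, re_add_im]
    rw [hzk]

end DirichletSeries

section GenericDirections

variable {ι : Type*} [Fintype ι]

theorem ae_sum_smul_ne_zero {E : Type*} [AddCommGroup E] [Module ℝ E] {v : ι → E} (hv : v ≠ 0) :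
    ∀ᵐ t : ι → ℝ, ∑ i, t i • v i ≠ 0 := by
  classical
  have hker : (Fintype.linearCombination ℝ v).ker ≠ ⊤ := fun htop => hv <| funext fun i => by
    simpa using DFunLike.congr_fun (LinearMap.ker_eq_top.mp htop) (Pi.single i 1)
  exact MeasureTheory.measure_eq_zero_iff_ae_notMem.mp
    (MeasureTheory.Measure.addHaar_submodule MeasureTheory.volume _ hker)

theorem dense_setOf_injective_sum_smul {E κ : Type*} [AddCommGroup E] [Module ℝ E] [Countable κ]
    {r : κ → ι → E} (hr : Function.Injective r) :
    Dense {t : ι → ℝ | Function.Injective fun k => ∑ i, t i • r k i} := by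
  have hpair (j k : κ) :
      ∀ᵐ t : ι → ℝ, ∑ i, t i • r j i = ∑ i, t i • r k i → j = k := by
    rcases eq_or_ne j k with rfl | hjk
    · simp
    · filter_upwards [ae_sum_smul_ne_zero (sub_ne_zero.mpr (hr.ne hjk))] with t ht heq
      exact absurd (by simp [smul_sub, heq]) ht
  exact MeasureTheory.Measure.dense_of_ae
    (MeasureTheory.ae_all_iff.mpr fun j => MeasureTheory.ae_all_iff.mpr (hpair j))

theorem mvPolynomial_eq_zero_of_eval_eq_zero_on_dense {σ : Type*} [Finite σ]
    {p : MvPolynomial σ ℂ} {G : Set (σ → ℝ)} (hG : Dense G) {U : σ → Set ℝ}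
    (hUo : ∀ i, IsOpen (U i)) (hUi : ∀ i, (U i).Infinite)
    (hp : ∀ t ∈ G, (∀ i, t i ∈ U i) → p.eval (fun i => (t i : ℂ)) = 0) : p = 0 := by
  have hbox (t : σ → ℝ) (ht : t ∈ Set.univ.pi U) : p.eval (fun i => (t i : ℂ)) = 0 := by
    have hclosed : IsClosed {t : σ → ℝ | p.eval (fun i => (t i : ℂ)) = 0} :=
      isClosed_eq (p.continuous_eval.comp (by fun_prop)) continuous_const
    have hopen : IsOpen (Set.univ.pi U) := isOpen_set_pi Set.finite_univ fun i _ => hUo i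
    exact closure_minimal (fun t ht => hp t ht.2 fun i => ht.1 i trivial) hclosed
      (hG.open_subset_closure_inter hopen ht)
  refine MvPolynomial.funext_set (fun i => (↑) '' U i)
    (fun i => (hUi i).image ofReal_injective.injOn) fun x hx => ?_
  choose t htU htx using fun i => hx i trivial
  simpa [htx] using hbox t fun i _ => htU i

theorem eq_zero_of_sum_mul_prod_pow_eq_zero_on_dense {S : Finset (ι → ℕ)} {a : (ι → ℕ) → ℂ}
    {G : Set (ι → ℝ)} (hG : Dense G) {U : ι → Set ℝ} (hUo : ∀ i, IsOpen (U i))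
    (hUi : ∀ i, (U i).Infinite)
    (ha : ∀ t ∈ G, (∀ i, t i ∈ U i) → ∑ s ∈ S, a s * ∏ i, (t i : ℂ) ^ s i = 0) :
    ∀ s ∈ S, a s = 0 := by
  classical
  let p : MvPolynomial ι ℂ :=
    ∑ s ∈ S, MvPolynomial.monomial (Finsupp.equivFunOnFinite.symm s) (a s)
  have hp : p = 0 := mvPolynomial_eq_zero_of_eval_eq_zero_on_dense hG hUo hUi fun t htG htU => by
    simpa [p, MvPolynomial.eval_monomial, Finsupp.prod_fintype] using ha t htG htU
  intro s hs
  calc a s = p.coeff (Finsupp.equivFunOnFinite.symm s) := by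
        simp [p, MvPolynomial.coeff_sum, MvPolynomial.coeff_monomial, hs]
    _ = 0 := by simp [hp]

end GenericDirections

section PowerLogSeries

variable {ι : Type*} [Fintype ι]

/-- The coefficient, as a polynomial in `u`, of the exponential `exp (u ⟨t, r⟩)` when the power-log
polynomial `x ^ r * ∑ s ∈ S, a s * (log x) ^ s` is restricted to the ray `x i = exp (u * t i)`. -/
noncomputable def rayPolynomial (S : Finset (ι → ℕ)) (a : (ι → ℕ) → ℂ) (t : ι → ℝ) : ℂ[X] :=
  ∑ s ∈ S, monomial (∑ i, s i) (a s * ∏ i, (t i : ℂ) ^ s i)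

theorem eval_rayPolynomial (S : Finset (ι → ℕ)) (a : (ι → ℕ) → ℂ) (t : ι → ℝ) (w : ℂ) :
    (rayPolynomial S a t).eval w = ∑ s ∈ S, a s * (∏ i, (t i : ℂ) ^ s i) * w ^ ∑ i, s i := by
  simp [rayPolynomial, eval_finsetSum]

theorem norm_eval_rayPolynomial_le (S : Finset (ι → ℕ)) (a : (ι → ℕ) → ℂ) (t : ι → ℝ) {u : ℝ}
    (hu : 1 ≤ u) :
    ‖(rayPolynomial S a t).eval (u : ℂ)‖ ≤
      (∑ s ∈ S, ‖a s * ∏ i, (t i : ℂ) ^ s i‖) * u ^ S.sup fun s => ∑ i, s i := by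
  rw [eval_rayPolynomial, Finset.sum_mul]
  refine norm_sum_le_of_le S fun s hs => ?_
  rw [norm_mul, norm_pow, norm_real, Real.norm_of_nonneg (by positivity)]
  gcongr
  exact Finset.le_sup (f := fun s : ι → ℕ => ∑ i, s i) hs

theorem prod_exp_cpow_mul_prod_log_exp_pow (r : ι → ℂ) (s : ι → ℕ) (t : ι → ℝ) (u : ℝ) :
    (∏ i, (Real.exp (u * t i) : ℂ) ^ r i) * ∏ i, (Real.log (Real.exp (u * t i)) : ℂ) ^ s i =
      (∏ i, (t i : ℂ) ^ s i) * (u : ℂ) ^ (∑ i, s i) * exp (u * ∑ i, t i • r i) := by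
  have hpow (i : ι) : (Real.exp (u * t i) : ℂ) ^ r i = exp (u * (t i • r i)) := by
    rw [cpow_def_of_ne_zero (ofReal_ne_zero.mpr (Real.exp_ne_zero _)),
      ← ofReal_log (Real.exp_nonneg _), Real.log_exp, real_smul, ofReal_mul, mul_assoc]
  simp_rw [hpow, ← exp_sum, ← Finset.mul_sum, Real.log_exp, ofReal_mul, mul_pow,
    Finset.prod_mul_distrib, Finset.prod_pow_eq_pow_sum]
  ring

theorem rayPolynomial_eq_zero_of_hasSum {κ : Type*} {r : κ → ι → ℂ} {S : Finset (ι → ℕ)}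
    {c : κ → (ι → ℕ) → ℂ} {t : ι → ℝ} (ht : Function.Injective fun k => ∑ i, t i • r k i)
    (hre : Tendsto (fun k => (∑ i, t i • r k i).re) cofinite atBot)
    (hs : ∀ u : ℝ, 1 ≤ u → HasSum (fun p : κ × S =>
      c p.1 p.2 * (∏ i, (Real.exp (u * t i) : ℂ) ^ r p.1 i) *
        ∏ i, (Real.log (Real.exp (u * t i)) : ℂ) ^ (p.2 : ι → ℕ) i) 0) (k : κ) :
    rayPolynomial S (c k) t = 0 := by
  simp only [mul_assoc (c _ _), prod_exp_cpow_mul_prod_log_exp_pow] at hs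
  refine eq_zero_of_hasSum_eval_mul_cexp ht hre
    (fun k u hu => norm_eval_rayPolynomial_le S (c k) t hu) ?_ (fun u hu => ?_) k
  · refine (hs 1 le_rfl).summable.norm.prod.congr fun k => ?_
    rw [tsum_fintype, Finset.sum_mul, ← Finset.sum_coe_sort S]
    simp [norm_exp, mul_assoc]
  · refine (hs u hu).prod_fiberwise fun k => ?_
    rw [eval_rayPolynomial, Finset.sum_mul, ← Finset.sum_coe_sort S]
    simpa only [mul_assoc] using hasSum_fintype _

theorem coeff_eq_zero_of_hasSum_powLog_zero {R : Set (ι → ℂ)} {S : Finset (ι → ℕ)}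
    {c : (ι → ℂ) → (ι → ℕ) → ℂ}
    (hR : ∀ t : ι → ℝ, (∀ i, 0 < t i) →
      Tendsto (fun r : R => ∑ i, t i * (r.1 i).re) cofinite atTop)
    (hs : ∀ x : ι → ℝ, (∀ i, x i ∈ Set.Ioo (0 : ℝ) 1) → HasSum (fun p : R × S =>
      c p.1 p.2 * (∏ i, (x i : ℂ) ^ p.1.1 i) * ∏ i, (Real.log (x i) : ℂ) ^ p.2.1 i) 0) :
    ∀ r ∈ R, ∀ s ∈ S, c r s = 0 := by
  intro r hr
  have : Countable R := countable_of_tendsto_cofinite_atTop (hR 1 fun _ => one_pos)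
  refine eq_zero_of_sum_mul_prod_pow_eq_zero_on_dense
    (dense_setOf_injective_sum_smul (Subtype.val_injective (p := (· ∈ R))))
    (fun _ => isOpen_Iio (a := 0)) (fun _ => Set.Iio_infinite 0) fun t htinj ht => ?_
  have hre : Tendsto (fun r : R => (∑ i, t i • r.1 i).re) cofinite atBot := by
    simpa [tendsto_neg_atTop_iff] using hR (-t) fun i => neg_pos.mpr (ht i)
  have hmem (u : ℝ) (hu : 1 ≤ u) (i : ι) : Real.exp (u * t i) ∈ Set.Ioo (0 : ℝ) 1 :=
    ⟨Real.exp_pos _,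
      Real.exp_lt_one_iff.mpr (mul_neg_of_pos_of_neg (one_pos.trans_le hu) (ht i))⟩
  have hray := rayPolynomial_eq_zero_of_hasSum (c := fun r : R => c r) htinj hre
    (fun u hu => hs _ (hmem u hu)) ⟨r, hr⟩
  simpa [eval_rayPolynomial] using congrArg (eval 1) hray

theorem finite_setOf_sum_mul_natCast_le {t : ι → ℝ} (ht : ∀ i, 0 < t i) (B : ℝ) :
    {α : ι → ℕ | ∑ i, t i * α i ≤ B}.Finite := by
  classical
  refine (Set.finite_Iic fun i => ⌊B / t i⌋₊).subset fun α hα i => Nat.le_floor ?_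
  rw [le_div_iff₀' (ht i)]
  exact (Finset.single_le_sum (f := fun i => t i * (α i : ℝ))
    (fun j _ => mul_nonneg (ht j).le (Nat.cast_nonneg _)) (Finset.mem_univ i)).trans hα

theorem tendsto_sum_mul_re_add_natCast (Γ : Finset (ι → ℂ)) {t : ι → ℝ} (ht : ∀ i, 0 < t i) :
    Tendsto (fun r : {r : ι → ℂ | ∃ γ ∈ Γ, ∃ α : ι → ℕ, r = fun i => γ i + (α i : ℂ)} =>
      ∑ i, t i * (r.1 i).re) cofinite atTop := by
  refine tendsto_atTop.mpr fun B => eventually_cofinite.mpr ?_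
  have hfinite : (⋃ γ ∈ Γ, (fun (α : ι → ℕ) i => γ i + (α i : ℂ)) ''
      {α | ∑ i, t i * α i ≤ B - ∑ i, t i * (γ i).re}).Finite :=
    Γ.finite_toSet.biUnion fun γ _ => (finite_setOf_sum_mul_natCast_le ht _).image _
  refine (hfinite.preimage Subtype.val_injective.injOn).subset ?_
  rintro ⟨_, γ, hγ, α, rfl⟩ hlt
  refine Set.mem_biUnion hγ ⟨α, ?_, rfl⟩
  have hsplit : ∑ i, t i * (γ i + (α i : ℂ)).re = ∑ i, t i * (γ i).re + ∑ i, t i * α i := by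
    simp [mul_add, Finset.sum_add_distrib]
  exact le_sub_iff_add_le'.mpr (hsplit ▸ (not_le.mp hlt).le)

end PowerLogSeries

theorem stmt_6_general {ι : Type*} [Fintype ι] (S : Finset (ι → ℕ))
    (c : (ι → ℂ) → (ι → ℕ) → ℂ) (R : Set (ι → ℂ))
    (hR : ∀ t : ι → ℝ, (∀ i, 0 < t i) →
      Tendsto (fun r : R => ∑ i, t i * (r.1 i).re) cofinite atTop)
    (hsum : ∀ x : ι → ℝ, (∀ i, x i ∈ Set.Ioo (0 : ℝ) 1) →
      Summable (fun p : {p : (ι → ℂ) × (ι → ℕ) // p.1 ∈ R ∧ p.2 ∈ S} =>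
        c p.1.1 p.1.2 * (∏ i, (x i : ℂ) ^ (p.1.1 i)) *
          ∏ i, ((Real.log (x i) : ℂ)) ^ (p.1.2 i)))
    (f : (ι → ℝ) → ℂ)
    (hf : ∀ x : ι → ℝ, (∀ i, x i ∈ Set.Ioo (0 : ℝ) 1) →
      f x = ∑' p : {p : (ι → ℂ) × (ι → ℕ) // p.1 ∈ R ∧ p.2 ∈ S},
        c p.1.1 p.1.2 * (∏ i, (x i : ℂ) ^ (p.1.1 i)) *
          ∏ i, ((Real.log (x i) : ℂ)) ^ (p.1.2 i)) :
    (∀ x : ι → ℝ, (∀ i, x i ∈ Set.Ioo (0 : ℝ) 1) → f x = 0) ↔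
      ∀ r ∈ R, ∀ s ∈ S, c r s = 0 := by
  refine ⟨fun hf0 => coeff_eq_zero_of_hasSum_powLog_zero hR fun x hx => ?_, fun hc x hx => ?_⟩
  · let e : {p : (ι → ℂ) × (ι → ℕ) // p.1 ∈ R ∧ p.2 ∈ S} ≃ R × S := Equiv.subtypeProdEquivProd
    have hzero := (hsum x hx).hasSum
    rw [← hf x hx, hf0 x hx] at hzero
    exact e.hasSum_iff.mp hzero
  · rw [hf x hx]
    exact (tsum_congr fun p => by simp [hc _ p.2.1 _ p.2.2]).trans tsum_zero

/-- **Vanishing of multivariate power-log series.** Let `Γ ⊆ ℂ^m` and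
`S ⊆ ℕ^m` be finite, and let `(c_{r,s})` be coefficients indexed over `(Γ + ℕ^m) × S`.
If for each `x ∈ (0,1)^m` the family `c_{r,s} x^r (log x)^s` is summable with sum `f(x)`,
then `f` vanishes identically on `(0,1)^m` iff all the coefficients vanish. -/
theorem stmt_6 (m : ℕ) (hm : 1 ≤ m)
    (Γ : Finset (Fin m → ℂ)) (S : Finset (Fin m → ℕ))
    (c : (Fin m → ℂ) → (Fin m → ℕ) → ℂ)
    (R : Set (Fin m → ℂ))
    (hR : R = {r | ∃ γ ∈ Γ, ∃ α : Fin m → ℕ, r = fun i => γ i + (α i : ℂ)})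
    (hsum : ∀ x : Fin m → ℝ, (∀ i, x i ∈ Set.Ioo (0 : ℝ) 1) →
      Summable (fun p : {p : (Fin m → ℂ) × (Fin m → ℕ) // p.1 ∈ R ∧ p.2 ∈ S} =>
        c p.1.1 p.1.2 * (∏ i, (x i : ℂ) ^ (p.1.1 i)) *
          ∏ i, ((Real.log (x i) : ℂ)) ^ (p.1.2 i)))
    (f : (Fin m → ℝ) → ℂ)
    (hf : ∀ x : Fin m → ℝ, (∀ i, x i ∈ Set.Ioo (0 : ℝ) 1) →
      f x = ∑' p : {p : (Fin m → ℂ) × (Fin m → ℕ) // p.1 ∈ R ∧ p.2 ∈ S},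
        c p.1.1 p.1.2 * (∏ i, (x i : ℂ) ^ (p.1.1 i)) *
          ∏ i, ((Real.log (x i) : ℂ)) ^ (p.1.2 i)) :
    (∀ x : Fin m → ℝ, (∀ i, x i ∈ Set.Ioo (0 : ℝ) 1) → f x = 0) ↔
      ∀ r ∈ R, ∀ s ∈ S, c r s = 0 := by
  subst hR
  exact stmt_6_general S c _ (fun _ => tendsto_sum_mul_re_add_natCast Γ) hsum f hf
end

section
/- Let f, φ : ℝ → ℝ be continuously differentiable. Assume that φ' has only finitely many zeros, that there exists R₀ > 0 such that φ'(t) ≠ 0 for |t| ≥ R₀ and the function t ↦ f(t)/φ'(t) is monotone on [R₀, +∞) and monotone on (−∞, −R₀], and that f(t)/φ'(t) → 0 as t → +∞ and as t → −∞. Then the improper integral ∫_ℝ f(t) e^{iφ(t)} dt converges; that is, both limits lim_{R→+∞} ∫_0^R f(t) e^{iφ(t)} dt and lim_{R→+∞} ∫_{−R}^0 f(t) e^{iφ(t)} dt exist in ℂ. -/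
open Filter intervalIntegral

/-!
Write `f e^{iφ} = g F'` with `g = f / φ'` and `F = -i e^{iφ}`, so that `‖F‖ ≤ C := 1`. As `φ` is
only `C¹`, the monotone function `g` need not be absolutely continuous, so integration by parts is
replaced by the estimate `‖∫ₓʸ g F' - (g(y) F(y) - g(x) F(x))‖ ≤ C |g(y) - g(x)|`. Freezing `g` at
the left endpoint proves it on short intervals with `C + ε` in place of `C`; it then extends to all
intervals because the quantity inside the norm and the increments of `g` are additive. Since
`g → 0`, it shows that `∫ₐᴿ g F' - g(R) F(R)` is Cauchy as `R → ∞`, while `g(R) F(R) → 0`. The other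
half-line follows by reflection.
-/

section

open MeasureTheory Set Topology

lemma dist_le_sub_of_forall_sub_le_dist_le_sub {α : Type*} [PseudoMetricSpace α] {u : ℝ → α}
    {G : ℝ → ℝ} {a b δ : ℝ} (hδ : 0 < δ) (hab : a ≤ b)
    (h : ∀ x y, a ≤ x → x ≤ y → y ≤ b → y - x ≤ δ → dist (u x) (u y) ≤ G y - G x) :
    dist (u a) (u b) ≤ G b - G a := by
  suffices hn : ∀ n : ℕ, ∀ y, a ≤ y → y ≤ b → y - a ≤ n * δ → dist (u a) (u y) ≤ G y - G a by
    obtain ⟨n, hn'⟩ := exists_nat_ge ((b - a) / δ)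
    exact hn n b hab le_rfl ((div_le_iff₀ hδ).1 hn')
  intro n
  induction n with
  | zero =>
    intro y hay hyb hya
    exact h a y le_rfl hay hyb (hya.trans (by simpa using hδ.le))
  | succ n ih =>
    intro y hay hyb hya
    push_cast at hya
    rcases le_total (y - δ) a with hya' | hya'
    · exact h a y le_rfl hay hyb (by linarith)
    · calc dist (u a) (u y) ≤ dist (u a) (u (y - δ)) + dist (u (y - δ)) (u y) :=
            dist_triangle _ _ _
        _ ≤ (G (y - δ) - G a) + (G y - G (y - δ)) := by
            gcongr
            · exact ih _ hya' (by linarith) (by linarith)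
            · exact h _ _ hya' (by linarith) hyb (by linarith)
        _ = G y - G a := by ring

lemma exists_pos_forall_integral_lt {h : ℝ → ℝ} {a b : ℝ} (hab : a ≤ b)
    (hh : IntervalIntegrable h volume a b) {ε : ℝ} (hε : 0 < ε) :
    ∃ δ > 0, ∀ x y, a ≤ x → x ≤ y → y ≤ b → y - x ≤ δ → (∫ t in x..y, h t) < ε := by
  have hcont : ContinuousOn (fun x => ∫ t in a..x, h t) (Icc a b) :=
    uIcc_of_le hab ▸ continuousOn_primitive_interval' hh left_mem_uIcc
  obtain ⟨δ, hδ, hunif⟩ := Metric.uniformContinuousOn_iff_le.1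
    (isCompact_Icc.uniformContinuousOn_of_continuous hcont) (ε / 2) (half_pos hε)
  refine ⟨δ, hδ, fun x y hax hxy hyb hyx => ?_⟩
  have hint : ∀ z, a ≤ z → z ≤ b → IntervalIntegrable h volume a z := fun z haz hzb =>
    hh.mono_set (uIcc_subset_uIcc_left (by rw [uIcc_of_le hab]; exact ⟨haz, hzb⟩))
  have hay := hax.trans hxy
  have hxb := hxy.trans hyb
  rw [← integral_interval_sub_left (hint y hay hyb) (hint x hax hxb)]
  have hdist := hunif y ⟨hay, hyb⟩ x ⟨hax, hxb⟩
    (by rwa [Real.dist_eq, abs_of_nonneg (sub_nonneg.2 hxy)])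
  exact (le_abs_self _).trans_lt (hdist.trans_lt (half_lt_self hε))

section MonotoneWeight

variable {E : Type*} [NormedAddCommGroup E] [NormedSpace ℝ E] {F F' : ℝ → E} {g : ℝ → ℝ}
  {a b C : ℝ}

lemma intervalIntegrable_smul_of_monotoneOn_or_antitoneOn
    (hg : MonotoneOn g (uIcc a b) ∨ AntitoneOn g (uIcc a b))
    (hF' : IntervalIntegrable F' volume a b) :
    IntervalIntegrable (fun t => g t • F' t) volume a b := by
  rw [intervalIntegrable_iff] at hF' ⊢
  have hg_bdd : MemLp g ⊤ (volume.restrict (uIcc a b)) :=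
    hg.elim (·.memLp_isCompact isCompact_uIcc) (·.memLp_isCompact isCompact_uIcc)
  exact hF'.smul_of_top_right
    (hg_bdd.mono_measure (Measure.restrict_mono uIoc_subset_uIcc le_rfl))

/-- The primitive of `g • F'` from `a`, minus the boundary term `g • F` of an integration by parts.
Its increments play the role of the Stieltjes integrals `-∫ F dg`, which are avoided here. -/
noncomputable def byPartsRemainder (g : ℝ → ℝ) (F F' : ℝ → E) (a x : ℝ) : E :=
  (∫ t in a..x, g t • F' t) - g x • F x

lemma dist_byPartsRemainder {x y : ℝ}
    (hx : IntervalIntegrable (fun t => g t • F' t) volume a x)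
    (hy : IntervalIntegrable (fun t => g t • F' t) volume a y) :
    dist (byPartsRemainder g F F' a x) (byPartsRemainder g F F' a y) =
      ‖(∫ t in x..y, g t • F' t) - (g y • F y - g x • F x)‖ := by
  rw [dist_comm, dist_eq_norm, ← integral_interval_sub_left hy hx]
  congr 1
  simp only [byPartsRemainder]
  abel

variable [CompleteSpace E]

lemma norm_integral_smul_deriv_sub_le_mul_integral_norm_add (hab : a ≤ b)
    (hF : ∀ t ∈ Icc a b, HasDerivAt F (F' t) t) (hF' : IntervalIntegrable F' volume a b)
    (hg : MonotoneOn g (Icc a b)) :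
    ‖(∫ t in a..b, g t • F' t) - (g b • F b - g a • F a)‖ ≤
      (g b - g a) * ((∫ t in a..b, ‖F' t‖) + ‖F b‖) := by
  rw [← uIcc_of_le hab] at hF hg
  have hgab : 0 ≤ g b - g a := sub_nonneg.2 (hg left_mem_uIcc right_mem_uIcc hab)
  have hfreeze : (∫ t in a..b, g t • F' t) - (g b • F b - g a • F a) =
      (∫ t in a..b, (g t - g a) • F' t) - (g b - g a) • F b := by
    simp_rw [sub_smul]
    rw [integral_sub (intervalIntegrable_smul_of_monotoneOn_or_antitoneOn (.inl hg) hF')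
        (hF'.continuousOn_smul continuousOn_const),
      intervalIntegral.integral_smul, integral_eq_sub_of_hasDerivAt hF hF', smul_sub]
    abel
  have hosc : ‖∫ t in a..b, (g t - g a) • F' t‖ ≤ (g b - g a) * ∫ t in a..b, ‖F' t‖ := by
    rw [← intervalIntegral.integral_const_mul]
    refine intervalIntegral.norm_integral_le_of_norm_le hab
      (.of_forall fun t ht => ?_) (hF'.norm.const_mul _)
    have ht' : t ∈ uIcc a b := uIoc_subset_uIcc (by rwa [uIoc_of_le hab])
    have hat : g a ≤ g t := hg left_mem_uIcc ht' ht.1.le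
    have htb : g t ≤ g b := hg ht' right_mem_uIcc ht.2
    rw [norm_smul, Real.norm_of_nonneg (sub_nonneg.2 hat)]
    gcongr
  calc ‖(∫ t in a..b, g t • F' t) - (g b • F b - g a • F a)‖
      ≤ ‖∫ t in a..b, (g t - g a) • F' t‖ + ‖(g b - g a) • F b‖ := hfreeze ▸ norm_sub_le _ _
    _ ≤ (g b - g a) * (∫ t in a..b, ‖F' t‖) + (g b - g a) * ‖F b‖ := by
        rw [norm_smul, Real.norm_of_nonneg hgab]
        gcongr
    _ = (g b - g a) * ((∫ t in a..b, ‖F' t‖) + ‖F b‖) := by ring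

lemma norm_integral_smul_deriv_sub_le_of_monotoneOn_of_pos (hab : a ≤ b)
    (hF : ∀ t ∈ Icc a b, HasDerivAt F (F' t) t) (hF' : IntervalIntegrable F' volume a b)
    (hC : ∀ t ∈ Icc a b, ‖F t‖ ≤ C) (hg : MonotoneOn g (Icc a b)) {ε : ℝ} (hε : 0 < ε) :
    ‖(∫ t in a..b, g t • F' t) - (g b • F b - g a • F a)‖ ≤ (C + ε) * (g b - g a) := by
  have hint : ∀ x ∈ Icc a b, IntervalIntegrable (fun t => g t • F' t) volume a x := fun x hx =>
    (intervalIntegrable_smul_of_monotoneOn_or_antitoneOn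
      (.inl (uIcc_of_le hab ▸ hg)) hF').mono_set
      (uIcc_subset_uIcc_left (Icc_subset_uIcc hx))
  obtain ⟨δ, hδ, hsmall⟩ := exists_pos_forall_integral_lt hab hF'.norm hε
  rw [← dist_byPartsRemainder (hint a (left_mem_Icc.2 hab)) (hint b (right_mem_Icc.2 hab)), mul_sub]
  refine dist_le_sub_of_forall_sub_le_dist_le_sub (G := fun x => (C + ε) * g x) hδ hab
    fun x y hax hxy hyb hyx => ?_
  have hx : x ∈ Icc a b := ⟨hax, hxy.trans hyb⟩
  have hy : y ∈ Icc a b := ⟨hax.trans hxy, hyb⟩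
  have hsub : Icc x y ⊆ Icc a b := Icc_subset_Icc hax hyb
  have hF'xy : IntervalIntegrable F' volume x y :=
    hF'.mono_set (uIcc_subset_uIcc (Icc_subset_uIcc hx) (Icc_subset_uIcc hy))
  rw [dist_byPartsRemainder (hint x hx) (hint y hy)]
  calc ‖(∫ t in x..y, g t • F' t) - (g y • F y - g x • F x)‖
      ≤ (g y - g x) * ((∫ t in x..y, ‖F' t‖) + ‖F y‖) :=
        norm_integral_smul_deriv_sub_le_mul_integral_norm_add hxy (fun t ht => hF t (hsub ht))
          hF'xy (hg.mono hsub)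
    _ ≤ (g y - g x) * (ε + C) := mul_le_mul_of_nonneg_left
        (add_le_add (hsmall x y hax hxy hyb hyx).le (hC y hy)) (sub_nonneg.2 (hg hx hy hxy))
    _ = (C + ε) * g y - (C + ε) * g x := by ring

lemma norm_integral_smul_deriv_sub_le_of_monotoneOn (hab : a ≤ b)
    (hF : ∀ t ∈ Icc a b, HasDerivAt F (F' t) t) (hF' : IntervalIntegrable F' volume a b)
    (hC : ∀ t ∈ Icc a b, ‖F t‖ ≤ C) (hg : MonotoneOn g (Icc a b)) :
    ‖(∫ t in a..b, g t • F' t) - (g b • F b - g a • F a)‖ ≤ C * (g b - g a) := by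
  have hlim : Tendsto (fun ε => (C + ε) * (g b - g a)) (𝓝[>] 0) (𝓝 (C * (g b - g a))) :=
    tendsto_nhdsWithin_of_tendsto_nhds (Continuous.tendsto' (by fun_prop) _ _ (by simp))
  exact ge_of_tendsto hlim (eventually_mem_nhdsWithin.mono fun ε hε =>
    norm_integral_smul_deriv_sub_le_of_monotoneOn_of_pos hab hF hF' hC hg hε)

lemma norm_integral_smul_deriv_sub_le_of_antitoneOn (hab : a ≤ b)
    (hF : ∀ t ∈ Icc a b, HasDerivAt F (F' t) t) (hF' : IntervalIntegrable F' volume a b)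
    (hC : ∀ t ∈ Icc a b, ‖F t‖ ≤ C) (hg : AntitoneOn g (Icc a b)) :
    ‖(∫ t in a..b, g t • F' t) - (g b • F b - g a • F a)‖ ≤ C * (g a - g b) := by
  have hneg := norm_integral_smul_deriv_sub_le_of_monotoneOn hab hF hF' hC hg.neg
  simp only [neg_smul, intervalIntegral.integral_neg, neg_sub_neg] at hneg
  rw [← norm_neg]
  exact (by congr 1; abel : ‖_‖ = ‖_‖).trans_le hneg

lemma dist_byPartsRemainder_le
    (hF : ∀ t ∈ Ici a, HasDerivAt F (F' t) t) (hF' : ∀ b ∈ Ici a, IntervalIntegrable F' volume a b)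
    (hC : ∀ t ∈ Ici a, ‖F t‖ ≤ C) (hg : MonotoneOn g (Ici a) ∨ AntitoneOn g (Ici a))
    {x y : ℝ} (hx : x ∈ Ici a) (hy : y ∈ Ici a) :
    dist (byPartsRemainder g F F' a x) (byPartsRemainder g F F' a y) ≤ C * dist (g x) (g y) := by
  wlog hxy : x ≤ y generalizing x y
  · rw [dist_comm, dist_comm (g x)]
    exact this hy hx (le_of_not_ge hxy)
  have hint : ∀ z ∈ Ici a, IntervalIntegrable (fun t => g t • F' t) volume a z := fun z hz =>
    have hsub : uIcc a z ⊆ Ici a := uIcc_of_le (mem_Ici.1 hz) ▸ Icc_subset_Ici_self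
    intervalIntegrable_smul_of_monotoneOn_or_antitoneOn
      (hg.imp (·.mono hsub) (·.mono hsub)) (hF' z hz)
  have hsub : Icc x y ⊆ Ici a := fun t ht => hx.trans ht.1
  have hFxy : ∀ t ∈ Icc x y, HasDerivAt F (F' t) t := fun t ht => hF t (hsub ht)
  have hF'xy : IntervalIntegrable F' volume x y := (hF' x hx).symm.trans (hF' y hy)
  have hCxy : ∀ t ∈ Icc x y, ‖F t‖ ≤ C := fun t ht => hC t (hsub ht)
  have hC₀ : 0 ≤ C := (norm_nonneg _).trans (hC x hx)
  rw [dist_byPartsRemainder (hint x hx) (hint y hy), Real.dist_eq]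
  rcases hg with hg | hg
  · refine (norm_integral_smul_deriv_sub_le_of_monotoneOn hxy hFxy hF'xy hCxy
      (hg.mono hsub)).trans ?_
    rw [abs_sub_comm]
    exact mul_le_mul_of_nonneg_left (le_abs_self _) hC₀
  · exact (norm_integral_smul_deriv_sub_le_of_antitoneOn hxy hFxy hF'xy hCxy
      (hg.mono hsub)).trans (mul_le_mul_of_nonneg_left (le_abs_self _) hC₀)

lemma exists_tendsto_integral_smul_deriv_atTop (hF : ∀ t ∈ Ici a, HasDerivAt F (F' t) t)
    (hF' : ∀ b ∈ Ici a, IntervalIntegrable F' volume a b) (hC : ∀ t ∈ Ici a, ‖F t‖ ≤ C)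
    (hg : MonotoneOn g (Ici a) ∨ AntitoneOn g (Ici a)) (hg₀ : Tendsto g atTop (𝓝 0)) :
    ∃ L : E, Tendsto (fun R => ∫ t in a..R, g t • F' t) atTop (𝓝 L) := by
  have hcauchy : CauchySeq (byPartsRemainder g F F' a) := by
    have hg_cauchy := cauchySeq_iff_tendsto_dist_atTop_0.1 hg₀.cauchySeq
    refine cauchySeq_iff_tendsto_dist_atTop_0.2 (squeeze_zero' (.of_forall fun _ => dist_nonneg)
      ?_ (by simpa using hg_cauchy.const_mul C))
    filter_upwards [eventually_ge_atTop (a, a)] with p hp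
    exact dist_byPartsRemainder_le hF hF' hC hg hp.1 hp.2
  have hboundary : Tendsto (fun R => g R • F R) atTop (𝓝 0) := by
    refine hg₀.zero_smul_isBoundedUnder_le (isBoundedUnder_of_eventually_le (a := C) ?_)
    filter_upwards [eventually_ge_atTop a] with t ht using hC t ht
  obtain ⟨L, hL⟩ := cauchySeq_tendsto_of_complete hcauchy
  exact ⟨L, by simpa [byPartsRemainder] using hL.add hboundary⟩

end MonotoneWeight

lemma exists_tendsto_integral_atTop_of_exists_tendsto {E : Type*} [NormedAddCommGroup E]
    [NormedSpace ℝ E] {h : ℝ → E} (hh : ∀ a b, IntervalIntegrable h volume a b) {a : ℝ} (b : ℝ)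
    (hlim : ∃ L, Tendsto (fun R => ∫ t in a..R, h t) atTop (𝓝 L)) :
    ∃ L, Tendsto (fun R => ∫ t in b..R, h t) atTop (𝓝 L) := by
  obtain ⟨L, hL⟩ := hlim
  exact ⟨(∫ t in b..a, h t) + L, (hL.const_add _).congr fun R =>
    integral_add_adjacent_intervals (hh b a) (hh a R)⟩

section Oscillatory

variable {f φ : ℝ → ℝ}

lemma hasDerivAt_neg_I_mul_cexp_I_mul {φ' t : ℝ} (hφ : HasDerivAt φ φ' t) :
    HasDerivAt (fun s => -Complex.I * Complex.exp (Complex.I * φ s))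
      (φ' * Complex.exp (Complex.I * φ t)) t := by
  refine ((hφ.ofReal_comp.const_mul Complex.I).cexp.const_mul (-Complex.I)).congr_deriv ?_
  linear_combination (-φ' * Complex.exp (Complex.I * φ t)) * Complex.I_sq

lemma intervalIntegrable_ofReal_mul_cexp_I_mul {a b : ℝ} (hf : IntervalIntegrable f volume a b)
    (hφ : Continuous φ) :
    IntervalIntegrable (fun t => (f t : ℂ) * Complex.exp (Complex.I * φ t)) volume a b := by
  have hf_ofReal : IntervalIntegrable (fun t => (f t : ℂ)) volume a b := ⟨hf.1.ofReal, hf.2.ofReal⟩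
  exact hf_ofReal.mul_continuousOn (by fun_prop)

lemma exists_tendsto_integral_mul_cexp_atTop {a : ℝ} (b : ℝ)
    (hf : ∀ a b, IntervalIntegrable f volume a b) (hφ : Differentiable ℝ φ)
    (hφ' : ∀ a b, IntervalIntegrable (deriv φ) volume a b)
    (hne : ∀ t ∈ Ici a, deriv φ t ≠ 0)
    (hmono : MonotoneOn (fun t => f t / deriv φ t) (Ici a) ∨
      AntitoneOn (fun t => f t / deriv φ t) (Ici a))
    (hlim : Tendsto (fun t => f t / deriv φ t) atTop (𝓝 0)) :
    ∃ L : ℂ, Tendsto (fun R => ∫ t in b..R, (f t : ℂ) * Complex.exp (Complex.I * φ t))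
      atTop (𝓝 L) := by
  have hint : ∀ a b, IntervalIntegrable
      (fun t => (f t : ℂ) * Complex.exp (Complex.I * φ t)) volume a b := fun a b =>
    intervalIntegrable_ofReal_mul_cexp_I_mul (hf a b) hφ.continuous
  refine exists_tendsto_integral_atTop_of_exists_tendsto hint (a := a) b ?_
  obtain ⟨L, hL⟩ := exists_tendsto_integral_smul_deriv_atTop (a := a) (C := 1)
    (fun t _ => hasDerivAt_neg_I_mul_cexp_I_mul (hφ t).hasDerivAt)
    (fun b _ => intervalIntegrable_ofReal_mul_cexp_I_mul (hφ' a b) hφ.continuous)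
    (fun t _ => by simp) hmono hlim
  refine ⟨L, hL.congr' ?_⟩
  filter_upwards [eventually_ge_atTop a] with R hR
  refine integral_congr fun t ht => ?_
  have ht : t ∈ Ici a := (uIcc_of_le hR ▸ ht).1
  simp only [Complex.real_smul]
  rw [← mul_assoc, ← Complex.ofReal_mul, div_mul_cancel₀ _ (hne t ht)]

lemma exists_tendsto_integral_mul_cexp_atBot {a : ℝ} (b : ℝ)
    (hf : ∀ a b, IntervalIntegrable f volume a b) (hφ : Differentiable ℝ φ)
    (hφ' : ∀ a b, IntervalIntegrable (deriv φ) volume a b)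
    (hne : ∀ t ∈ Iic a, deriv φ t ≠ 0)
    (hmono : MonotoneOn (fun t => f t / deriv φ t) (Iic a) ∨
      AntitoneOn (fun t => f t / deriv φ t) (Iic a))
    (hlim : Tendsto (fun t => f t / deriv φ t) atBot (𝓝 0)) :
    ∃ L : ℂ, Tendsto (fun R => ∫ t in R..b, (f t : ℂ) * Complex.exp (Complex.I * φ t))
      atBot (𝓝 L) := by
  have hderiv : deriv (fun t => φ (-t)) = fun t => -deriv φ (-t) := funext (deriv_comp_neg φ)
  have hquot : (fun t => f (-t) / deriv (fun s => φ (-s)) t) =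
      fun t => -(f (-t) / deriv φ (-t)) := by
    simp only [hderiv, div_neg]
  have hmaps : MapsTo Neg.neg (Ici (-a)) (Iic a) := fun t ht => neg_le.1 (mem_Ici.1 ht)
  have hanti : AntitoneOn (Neg.neg : ℝ → ℝ) (Ici (-a)) := fun _ _ _ _ => neg_le_neg
  have hcomp_neg : ∀ {h : ℝ → ℝ}, (∀ a b, IntervalIntegrable h volume a b) →
      ∀ a b, IntervalIntegrable (fun t => h (-t)) volume a b := by
    intro h hh a b
    simpa using (IntervalIntegrable.iff_comp_neg (by simp)).1 (hh (-a) (-b))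
  obtain ⟨L, hL⟩ := exists_tendsto_integral_mul_cexp_atTop (a := -a) (-b) (hcomp_neg hf)
    (φ := fun t => φ (-t)) (hφ.comp differentiable_neg)
    (hderiv ▸ fun a b => (hcomp_neg hφ' a b).neg)
    (fun t ht => by simpa [hderiv] using hne _ (hmaps ht))
    (hquot ▸ hmono.imp (fun h => (MonotoneOn.comp_AntitoneOn h hanti hmaps).neg)
      fun h => (AntitoneOn.comp h hanti hmaps).neg)
    (hquot ▸ by simpa using (hlim.comp tendsto_neg_atTop_atBot).neg)
  refine ⟨L, (hL.comp tendsto_neg_atBot_atTop).congr fun R => ?_⟩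
  simpa using integral_comp_neg (a := -b) (b := -R)
    fun t => (f t : ℂ) * Complex.exp (Complex.I * φ t)

end Oscillatory

end

theorem stmt_8_general (f φ : ℝ → ℝ)
    (hf : ∀ a b : ℝ, IntervalIntegrable f MeasureTheory.volume a b)
    (hφ : Differentiable ℝ φ)
    (hφ' : ∀ a b : ℝ, IntervalIntegrable (deriv φ) MeasureTheory.volume a b)
    (R₀ : ℝ) (hne : ∀ t : ℝ, R₀ ≤ |t| → deriv φ t ≠ 0)
    (hmono_pos : MonotoneOn (fun t => f t / deriv φ t) (Set.Ici R₀) ∨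
      AntitoneOn (fun t => f t / deriv φ t) (Set.Ici R₀))
    (hmono_neg : MonotoneOn (fun t => f t / deriv φ t) (Set.Iic (-R₀)) ∨
      AntitoneOn (fun t => f t / deriv φ t) (Set.Iic (-R₀)))
    (hlim_pos : Tendsto (fun t => f t / deriv φ t) atTop (nhds 0))
    (hlim_neg : Tendsto (fun t => f t / deriv φ t) atBot (nhds 0)) :
    (∃ L : ℂ, Tendsto (fun R : ℝ =>
        ∫ t in (0 : ℝ)..R, (f t : ℂ) * Complex.exp (Complex.I * (φ t : ℂ)))
      atTop (nhds L)) ∧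
    (∃ L : ℂ, Tendsto (fun R : ℝ =>
        ∫ t in (-R)..(0 : ℝ), (f t : ℂ) * Complex.exp (Complex.I * (φ t : ℂ)))
      atTop (nhds L)) := by
  have hpos := exists_tendsto_integral_mul_cexp_atTop 0 hf hφ hφ'
    (fun t ht => hne t (le_abs.2 (.inl ht))) hmono_pos hlim_pos
  obtain ⟨L, hneg⟩ := exists_tendsto_integral_mul_cexp_atBot 0 hf hφ hφ'
    (fun t ht => hne t (le_abs.2 (.inr (le_neg.1 ht)))) hmono_neg hlim_neg
  exact ⟨hpos, L, hneg.comp tendsto_neg_atTop_atBot⟩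

/-- **Convergence of oscillatory improper integrals.** If `f, φ : ℝ → ℝ` are
`C¹`, `φ'` has finitely many zeros, `f/φ'` is monotone on `[R₀, ∞)` and on `(-∞, -R₀]`
(where `φ' ≠ 0` off `(-R₀, R₀)`) and tends to `0` at `±∞`, then the improper integral
`∫_ℝ f(t) e^{iφ(t)} dt` converges. -/
theorem stmt_8 (f φ : ℝ → ℝ) (hf : ContDiff ℝ 1 f) (hφ : ContDiff ℝ 1 φ)
    (hzeros : {t : ℝ | deriv φ t = 0}.Finite)
    (R₀ : ℝ) (hR₀ : 0 < R₀)
    (hne : ∀ t : ℝ, R₀ ≤ |t| → deriv φ t ≠ 0)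
    (hmono_pos : MonotoneOn (fun t => f t / deriv φ t) (Set.Ici R₀) ∨
      AntitoneOn (fun t => f t / deriv φ t) (Set.Ici R₀))
    (hmono_neg : MonotoneOn (fun t => f t / deriv φ t) (Set.Iic (-R₀)) ∨
      AntitoneOn (fun t => f t / deriv φ t) (Set.Iic (-R₀)))
    (hlim_pos : Tendsto (fun t => f t / deriv φ t) atTop (nhds 0))
    (hlim_neg : Tendsto (fun t => f t / deriv φ t) atBot (nhds 0)) :
    (∃ L : ℂ, Tendsto (fun R : ℝ =>
        ∫ t in (0 : ℝ)..R, (f t : ℂ) * Complex.exp (Complex.I * (φ t : ℂ)))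
      atTop (nhds L)) ∧
    (∃ L : ℂ, Tendsto (fun R : ℝ =>
        ∫ t in (-R)..(0 : ℝ), (f t : ℂ) * Complex.exp (Complex.I * (φ t : ℂ)))
      atTop (nhds L)) := by
  exact stmt_8_general f φ (fun a b => hf.continuous.intervalIntegrable a b)
    (hφ.differentiable one_ne_zero)
    (fun a b => (hφ.continuous_deriv le_rfl).intervalIntegrable a b)
    R₀ hne hmono_pos hmono_neg hlim_pos hlim_neg
end

section
/- For every ξ ∈ ℝ, the improper integral ∫_ℝ e^{it²} e^{−2πiξt} dt converges and its value is √π · e^{iπ/4} · e^{−i π² ξ²}. -/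
open Filter Real intervalIntegral

/-!
Completing the square and translating reduces the claim to the Fresnel integral `∫ e^{iat²} dt`.
By Cauchy's theorem on the triangle `0, R, (1 + i)R`, the integral over `[0, R]` equals the one
over the hypotenuse minus the one over the vertical leg. On the hypotenuse `e^{iaz²}` is the
Gaussian `e^{-2at²}`; on the vertical leg its modulus is `e^{-2aRt}`, so that leg contributes
`O(1/R)`.
-/

open Complex (I)
open MeasureTheory Topology

section ImproperIntegral

variable {E : Type*} [NormedAddCommGroup E] [NormedSpace ℝ E]

/-- The improper integral of `f` over `ℝ` converges, with value `J`: `f` is integrable on compact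
intervals and the integrals over `[0, R]` and `[-R, 0]` have limits adding up to `J`. Unlike the
Bochner integral, this allows conditional convergence; unlike a principal value, it requires
convergence at each end separately. -/
structure HasImproperIntegral (f : ℝ → E) (J : E) : Prop where
  intervalIntegrable : ∀ a b : ℝ, IntervalIntegrable f volume a b
  exists_tendsto : ∃ L₁ L₂ : E,
    Tendsto (fun R : ℝ => ∫ t in (0 : ℝ)..R, f t) atTop (𝓝 L₁) ∧
    Tendsto (fun R : ℝ => ∫ t in (-R)..(0 : ℝ), f t) atTop (𝓝 L₂) ∧ L₁ + L₂ = J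

namespace HasImproperIntegral

variable {f : ℝ → E} {J L : E}

lemma of_even (hint : ∀ a b : ℝ, IntervalIntegrable f volume a b) (heven : Function.Even f)
    (hlim : Tendsto (fun R : ℝ => ∫ t in (0 : ℝ)..R, f t) atTop (𝓝 L)) :
    HasImproperIntegral f (L + L) := by
  refine ⟨hint, L, L, hlim, hlim.congr fun R => ?_, rfl⟩
  calc ∫ t in (0 : ℝ)..R, f t = ∫ t in (0 : ℝ)..R, f (-t) := by simp only [heven _]
    _ = ∫ t in (-R)..(0 : ℝ), f t := by rw [integral_comp_neg, neg_zero]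

lemma comp_add_right (hf : HasImproperIntegral f J) (c : ℝ) :
    HasImproperIntegral (fun t => f (t + c)) J := by
  obtain ⟨hint, L₁, L₂, hL₁, hL₂, hJ⟩ := hf
  refine ⟨fun a b => (IntervalIntegrable.comp_add_right_iff).2 (hint _ _),
    L₁ - ∫ t in (0 : ℝ)..c, f t, L₂ + ∫ t in (0 : ℝ)..c, f t, ?_, ?_, ?_⟩
  · refine ((hL₁.comp (tendsto_atTop_add_const_right _ c tendsto_id)).sub_const _).congr
      fun R => ?_
    rw [integral_comp_add_right, zero_add]
    exact integral_interval_sub_left (hint _ _) (hint _ _)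
  · refine ((hL₂.comp (tendsto_atTop_add_const_right _ (-c) tendsto_id)).add_const _).congr
      fun R => ?_
    rw [integral_comp_add_right, zero_add, Function.comp_apply, id, neg_add, neg_neg]
    exact integral_add_adjacent_intervals (hint _ _) (hint _ _)
  · rw [← hJ]
    abel

lemma const_mul {𝕜 : Type*} [RCLike 𝕜] {f : ℝ → 𝕜} {J : 𝕜} (hf : HasImproperIntegral f J)
    (c : 𝕜) : HasImproperIntegral (fun t => c * f t) (c * J) := by
  obtain ⟨hint, L₁, L₂, hL₁, hL₂, rfl⟩ := hf
  refine ⟨fun a b => (hint a b).const_mul c, c * L₁, c * L₂, ?_, ?_, (mul_add c L₁ L₂).symm⟩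
  · simpa only [intervalIntegral.integral_const_mul] using hL₁.const_mul c
  · simpa only [intervalIntegral.integral_const_mul] using hL₂.const_mul c

end HasImproperIntegral

end ImproperIntegral

section Cauchy

variable {E : Type*} [NormedAddCommGroup E] [NormedSpace ℂ E] [CompleteSpace E] {f F : ℂ → E}

lemma integral_smul_comp_line_eq_sub (hf : Continuous f) (hF : ∀ z, HasDerivAt F (f z) z)
    (p v : ℂ) (a b : ℝ) :
    ∫ t in a..b, v • f (p + t * v) = F (p + b * v) - F (p + a * v) := by
  refine integral_eq_sub_of_hasDerivAt (f := fun t : ℝ => F (p + t * v)) (fun t _ => ?_)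
    (Continuous.intervalIntegrable (by fun_prop) a b)
  have hline : HasDerivAt (fun t : ℝ => p + t * v) v t := by
    simpa using ((hasDerivAt_id (t : ℂ)).comp_ofReal.mul_const v).const_add p
  exact (hF (p + t * v)).scomp t hline

lemma integral_triangle_eq_of_differentiable (hf : Differentiable ℂ f) (u v : ℂ) (R : ℝ) :
    (∫ t in (0 : ℝ)..R, u • f (t * u)) + ∫ t in (0 : ℝ)..R, v • f (R * u + t * v) =
      ∫ t in (0 : ℝ)..R, (u + v) • f (t * (u + v)) := by
  obtain ⟨F, hF⟩ := hf.isExactOn_univ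
  have hline := integral_smul_comp_line_eq_sub hf.continuous fun z => hF z (Set.mem_univ z)
  have hu := hline 0 u 0 R
  have huv := hline 0 (u + v) 0 R
  simp only [zero_add, Complex.ofReal_zero, zero_mul] at hu huv
  rw [hu, hline, huv, Complex.ofReal_zero, zero_mul, add_zero, mul_add]
  abel

end Cauchy

section Fresnel

variable {a : ℝ}

lemma integral_exp_neg_mul_le_inv {c : ℝ} (hc : 0 < c) (R : ℝ) :
    ∫ t in (0 : ℝ)..R, Real.exp (-c * t) ≤ c⁻¹ := by
  have hval : ∫ t in (0 : ℝ)..R, Real.exp (-c * t) = c⁻¹ * (1 - Real.exp (-c * R)) := by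
    rw [integral_comp_mul_left Real.exp (neg_ne_zero.2 hc.ne'), integral_exp, mul_zero,
      Real.exp_zero, smul_eq_mul, inv_neg]
    ring
  rw [hval]
  exact mul_le_of_le_one_right (by positivity) (sub_le_self _ (Real.exp_nonneg _))

lemma norm_exp_I_mul_sq_vertical (a R t : ℝ) :
    ‖Complex.exp (I * a * (R + t * I) ^ 2)‖ = Real.exp (-(2 * a * R) * t) := by
  have hexpand : I * a * (R + t * I) ^ 2 =
      ((-(2 * a * R) * t : ℝ) : ℂ) + ((a * (R ^ 2 - t ^ 2) : ℝ) : ℂ) * I := by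
    push_cast
    linear_combination (a * t ^ 2 * I + 2 * a * R * t : ℂ) * Complex.I_sq
  rw [hexpand, Complex.exp_add, norm_mul, Complex.norm_exp_ofReal_mul_I, mul_one,
    Complex.norm_exp_ofReal]

lemma exp_I_mul_sq_diagonal (a t : ℝ) :
    Complex.exp (I * a * (t * (1 + I)) ^ 2) = (Real.exp (-(2 * a) * t ^ 2) : ℝ) := by
  push_cast
  congr 1
  linear_combination (a * t ^ 2 * (2 + I) : ℂ) * Complex.I_sq

lemma tendsto_integral_exp_I_mul_sq_vertical (ha : 0 < a) :
    Tendsto (fun R : ℝ => ∫ t in (0 : ℝ)..R, I * Complex.exp (I * a * (R + t * I) ^ 2))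
      atTop (𝓝 0) := by
  have hinv : Tendsto (fun R : ℝ => (2 * a * R)⁻¹) atTop (𝓝 0) :=
    tendsto_inv_atTop_zero.comp (tendsto_id.const_mul_atTop (by positivity))
  refine squeeze_zero_norm' ?_ hinv
  filter_upwards [eventually_gt_atTop 0] with R hR
  calc ‖∫ t in (0 : ℝ)..R, I * Complex.exp (I * a * (R + t * I) ^ 2)‖
      ≤ ∫ t in (0 : ℝ)..R, ‖I * Complex.exp (I * a * (R + t * I) ^ 2)‖ :=
        norm_integral_le_integral_norm hR.le
    _ = ∫ t in (0 : ℝ)..R, Real.exp (-(2 * a * R) * t) := by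
        simp only [norm_mul, Complex.norm_I, one_mul, norm_exp_I_mul_sq_vertical]
    _ ≤ (2 * a * R)⁻¹ := integral_exp_neg_mul_le_inv (by positivity) R

lemma tendsto_integral_exp_I_mul_sq_diagonal (ha : 0 < a) :
    Tendsto (fun R : ℝ =>
        ∫ t in (0 : ℝ)..R, (1 + I) * Complex.exp (I * a * (t * (1 + I)) ^ 2))
      atTop (𝓝 ((1 + I) * (√(π / (2 * a)) / 2 : ℝ))) := by
  have hgauss : Tendsto (fun R : ℝ => ∫ t in (0 : ℝ)..R, Real.exp (-(2 * a) * t ^ 2)) atTop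
      (𝓝 (√(π / (2 * a)) / 2)) := by
    rw [← integral_gaussian_Ioi (2 * a)]
    exact intervalIntegral_tendsto_integral_Ioi 0
      (integrable_exp_neg_mul_sq (by positivity)).integrableOn tendsto_id
  simp only [exp_I_mul_sq_diagonal, intervalIntegral.integral_const_mul,
    intervalIntegral.integral_ofReal]
  exact hgauss.ofReal.const_mul _

lemma one_add_I_eq_sqrt_two_mul_exp : 1 + I = √2 * Complex.exp (I * π / 4) := by
  have hangle : I * π / 4 = ((π / 4 : ℝ) : ℂ) * I := by push_cast; ring
  have hsq : (√2 : ℂ) * √2 = 2 := by exact_mod_cast Real.mul_self_sqrt zero_le_two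
  rw [hangle, Complex.exp_mul_I, ← Complex.ofReal_cos, ← Complex.ofReal_sin,
    Real.cos_pi_div_four, Real.sin_pi_div_four]
  push_cast
  linear_combination (-(1 + I) / 2) * hsq

lemma one_add_I_mul_sqrt_pi_div_two_mul (a : ℝ) :
    (1 + I) * (√(π / (2 * a)) : ℝ) = √(π / a) * Complex.exp (I * π / 4) := by
  have hsqrt : √2 * √(π / (2 * a)) = √(π / a) := by
    rw [← Real.sqrt_mul zero_le_two]
    congr 1
    ring
  rw [one_add_I_eq_sqrt_two_mul_exp, ← hsqrt]
  push_cast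
  ring

lemma tendsto_integral_exp_I_mul_sq (ha : 0 < a) :
    Tendsto (fun R : ℝ => ∫ t in (0 : ℝ)..R, Complex.exp (I * a * t ^ 2)) atTop
      (𝓝 (√(π / a) * Complex.exp (I * π / 4) / 2)) := by
  have hentire : Differentiable ℂ fun z : ℂ => Complex.exp (I * a * z ^ 2) := by fun_prop
  have hcauchy (R : ℝ) := integral_triangle_eq_of_differentiable hentire 1 I R
  simp only [smul_eq_mul, mul_one, one_mul] at hcauchy
  have hlim := (tendsto_integral_exp_I_mul_sq_diagonal ha).sub
    (tendsto_integral_exp_I_mul_sq_vertical ha)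
  rw [sub_zero, Complex.ofReal_div, ← mul_div_assoc, one_add_I_mul_sqrt_pi_div_two_mul] at hlim
  exact hlim.congr fun R => sub_eq_of_eq_add (hcauchy R).symm

lemma hasImproperIntegral_exp_I_mul_sq (ha : 0 < a) :
    HasImproperIntegral (fun t : ℝ => Complex.exp (I * a * t ^ 2))
      (√(π / a) * Complex.exp (I * π / 4)) := by
  rw [← add_halves (√(π / a) * Complex.exp (I * π / 4))]
  refine .of_even (fun b c => Continuous.intervalIntegrable (by fun_prop) b c) (fun t => ?_)
    (tendsto_integral_exp_I_mul_sq ha)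
  simp only [Complex.ofReal_neg, neg_sq]

lemma exp_I_mul_sq_mul_exp_I_mul (ha : a ≠ 0) (b t : ℝ) :
    Complex.exp (I * a * t ^ 2) * Complex.exp (I * b * t) =
      Complex.exp (-I * b ^ 2 / (4 * a)) *
        Complex.exp (I * a * ((t + b / (2 * a) : ℝ) : ℂ) ^ 2) := by
  have ha' : (a : ℂ) ≠ 0 := Complex.ofReal_ne_zero.2 ha
  rw [← Complex.exp_add, ← Complex.exp_add]
  congr 1
  push_cast
  field

theorem hasImproperIntegral_exp_I_mul_sq_mul_exp_I_mul (ha : 0 < a) (b : ℝ) :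
    HasImproperIntegral
      (fun t : ℝ => Complex.exp (I * a * t ^ 2) * Complex.exp (I * b * t))
      (√(π / a) * Complex.exp (I * π / 4) * Complex.exp (-I * b ^ 2 / (4 * a))) := by
  simp only [exp_I_mul_sq_mul_exp_I_mul ha.ne', mul_comm _ (Complex.exp (-I * b ^ 2 / (4 * a)))]
  exact ((hasImproperIntegral_exp_I_mul_sq ha).comp_add_right (b / (2 * a))).const_mul _

end Fresnel

/-- **Fresnel-type integral.** For every `ξ ∈ ℝ`, the improper integral
`∫_ℝ e^{it²} e^{-2πiξt} dt` converges and equals `√π e^{iπ/4} e^{-iπ²ξ²}`. -/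
theorem stmt_9 (ξ : ℝ) :
    ∃ L₁ L₂ : ℂ,
      Tendsto (fun R : ℝ => ∫ t in (0 : ℝ)..R,
          Complex.exp (Complex.I * (t : ℂ) ^ 2) *
            Complex.exp (-2 * (π : ℂ) * Complex.I * (ξ : ℂ) * (t : ℂ)))
        atTop (nhds L₁) ∧
      Tendsto (fun R : ℝ => ∫ t in (-R)..(0 : ℝ),
          Complex.exp (Complex.I * (t : ℂ) ^ 2) *
            Complex.exp (-2 * (π : ℂ) * Complex.I * (ξ : ℂ) * (t : ℂ)))
        atTop (nhds L₂) ∧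
      L₁ + L₂ = (Real.sqrt π : ℂ) * Complex.exp (Complex.I * (π : ℂ) / 4) *
        Complex.exp (-Complex.I * (π : ℂ) ^ 2 * (ξ : ℂ) ^ 2) := by
  have hlinear (t : ℝ) : -2 * (π : ℂ) * I * ξ * t = I * ((-2 * π * ξ : ℝ) : ℂ) * t := by
    push_cast
    ring
  have hphase : -I * (π : ℂ) ^ 2 * ξ ^ 2 =
      -I * ((-2 * π * ξ : ℝ) : ℂ) ^ 2 / (4 * (1 : ℝ)) := by
    push_cast
    ring
  simpa only [hlinear, hphase, Complex.ofReal_one, mul_one, div_one] using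
    (hasImproperIntegral_exp_I_mul_sq_mul_exp_I_mul one_pos (-2 * π * ξ)).exists_tendsto
end

section
/- Let f : ℝ → ℂ be defined by f(t) = t·e^{i t⁴/4}. For every ξ ∈ ℝ the improper integral h(ξ) := ∫_ℝ f(t) e^{−iξt} dt converges, and for each sign σ ∈ {1, −1} one has h(ξ) − σ·√(2π/3) · e^{iπ/4} · e^{−(3i/4)·|ξ|^{4/3}} → 0 as ξ → σ·∞. In particular, |h(ξ)| → √(2π/3) as |ξ| → ∞, so h does not tend to 0 at ±∞. -/
open Filter Real intervalIntegral

/-!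
Put `ξ = l³`, so that the phase `t⁴/4 - ξt` has its only real stationary point at `t = l`. Since the
integrand is entire, Cauchy's theorem moves the real line onto the line `l + (2 + i)x` through this
saddle point: the vertical connecting segments contribute nothing in the limit, and on the new line
the integrand decays like `exp (-(l²x² + x⁴)/2)`, which gives convergence for every `ξ`.
Expanding the phase at the saddle and rescaling `x` by `l` leaves the factor
`sign(ξ) e^{-3il⁴/4}`, with `l⁴ = |ξ|^{4/3}`, times an integral which depends only on `l⁻²`. As
`l⁻² → 0`, dominated convergence turns this integral into a Gaussian one along a rotated line, whose
value is `√(2π/3) e^{iπ/4}`.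
-/

section

open MeasureTheory Bornology Topology
open Complex (I)

section ImproperIntegral

variable {E : Type*} [NormedAddCommGroup E]

/-- `L` is the value of the improper integral of `g` over `ℝ`: the integrals over `[0, R]` and
`[-R, 0]` converge separately as `R → ∞`, and `L` is the sum of the two limits. -/
def HasImproperIntegral_s10 [NormedSpace ℝ E] (g : ℝ → E) (L : E) : Prop :=
  ∃ L₁ L₂ : E,
    Tendsto (fun R : ℝ => ∫ t in (0 : ℝ)..R, g t) atTop (𝓝 L₁) ∧
    Tendsto (fun R : ℝ => ∫ t in (-R)..(0 : ℝ), g t) atTop (𝓝 L₂) ∧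
    L = L₁ + L₂

variable [NormedSpace ℂ E] [CompleteSpace E]

lemma integral_smul_line_eq_sub_of_hasDerivAt {F G : ℂ → E} (hF : Continuous F)
    (hG : ∀ z, HasDerivAt G (F z) z) (c w : ℂ) (a b : ℝ) :
    ∫ s in a..b, w • F (c + w * s) = G (c + w * b) - G (c + w * a) := by
  refine integral_eq_sub_of_hasDerivAt (f := fun s : ℝ => G (c + w * s)) (fun s _ => ?_)
    (Continuous.intervalIntegrable (by fun_prop) _ _)
  have hline : HasDerivAt (fun s : ℝ => c + w * s) w s := by
    simpa using ((Complex.ofRealCLM.hasDerivAt (x := s)).const_mul w).const_add c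
  exact (hG _).scomp s hline

variable {F : ℂ → E} {w : ℂ}

lemma integral_ofReal_eq_add_line_sub_vertical (hF : Differentiable ℂ F) (a : ℝ) (w : ℂ) (x : ℝ) :
    ∫ t in (0 : ℝ)..(a + w.re * x), F t =
      (∫ t in (0 : ℝ)..a, F t) + (∫ s in (0 : ℝ)..x, w • F (a + w * s)) -
        I • ∫ y in (0 : ℝ)..(w.im * x), F ((a + w.re * x : ℝ) + y * I) := by
  obtain ⟨G, hG⟩ := hF.isExactOn_univ
  replace hG : ∀ z, HasDerivAt G (F z) z := fun z => hG z trivial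
  have primitive := integral_smul_line_eq_sub_of_hasDerivAt hF.continuous hG
  have real (b : ℝ) : ∫ t in (0 : ℝ)..b, F t = G b - G 0 := by simpa using primitive 0 1 0 b
  have vertical (r b : ℝ) :
      I • ∫ y in (0 : ℝ)..b, F (r + y * I) = G (r + b * I) - G r := by
    simpa [mul_comm I, intervalIntegral.integral_smul] using primitive r I 0 b
  have corner : (a + w * x : ℂ) = (a + w.re * x : ℝ) + (w.im * x : ℝ) * I := by
    conv_lhs => rw [← Complex.re_add_im w]
    push_cast
    ring
  rw [real, real, vertical, primitive, corner]
  simp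

lemma hasImproperIntegral_ofReal_of_line (hF : Differentiable ℂ F) (a : ℝ) (hw : 0 < w.re)
    (hline : Integrable fun x : ℝ => w • F (a + w * x))
    (hvertical : Tendsto
      (fun x : ℝ => ∫ y in (0 : ℝ)..(w.im * x), F ((a + w.re * x : ℝ) + y * I))
      (cobounded ℝ) (𝓝 0)) :
    HasImproperIntegral_s10 (fun t : ℝ => F t) (∫ x : ℝ, w • F (a + w * x)) := by
  have htop : Tendsto (fun R : ℝ => (R - a) / w.re) atTop atTop :=
    (tendsto_atTop_add_const_right _ (-a) tendsto_id).atTop_div_const hw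
  have hbot : Tendsto (fun R : ℝ => (-R - a) / w.re) atTop atBot :=
    (tendsto_atBot_add_const_right _ (-a) tendsto_neg_atTop_atBot).atBot_div_const hw
  have right := ((intervalIntegral_tendsto_integral_Ioi 0 hline.integrableOn htop).const_add
    (∫ t in (0 : ℝ)..a, F t)).sub
    (((hvertical.mono_left IsOrderBornology.atTop_le_cobounded).comp htop).const_smul I)
  have left := ((intervalIntegral_tendsto_integral_Iic 0 hline.integrableOn hbot).sub_const
    (∫ t in (0 : ℝ)..a, F t)).add
    (((hvertical.mono_left IsOrderBornology.atBot_le_cobounded).comp hbot).const_smul I)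
  refine ⟨_, _, right.congr fun R => ?_, left.congr fun R => ?_, ?_⟩
  · have endpoint : a + w.re * ((R - a) / w.re) = R := by field_simp; ring
    simpa only [Function.comp_apply, endpoint] using
      (integral_ofReal_eq_add_line_sub_vertical hF a w ((R - a) / w.re)).symm
  · have endpoint : a + w.re * ((-R - a) / w.re) = -R := by field_simp; ring
    have contour := integral_ofReal_eq_add_line_sub_vertical hF a w ((-R - a) / w.re)
    simp only [Function.comp_apply, endpoint] at contour ⊢
    rw [integral_symm 0 (-R), contour, integral_symm 0 ((-R - a) / w.re)]
    abel
  · rw [← integral_Iic_add_Ioi (b := 0) hline.integrableOn hline.integrableOn]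
    simp only [smul_zero]
    abel

end ImproperIntegral

lemma norm_integral_le_div_of_norm_le_mul_exp {E : Type*} [NormedAddCommGroup E] [NormedSpace ℝ E]
    {g : ℝ → E} {C k b : ℝ} (hC : 0 ≤ C) (hk : 0 < k) (hb : 0 ≤ b)
    (hg : ∀ y ∈ Set.Ioc 0 b, ‖g y‖ ≤ C * rexp (-k * y)) :
    ‖∫ y in (0 : ℝ)..b, g y‖ ≤ C / k := by
  have hcont : Continuous fun y : ℝ => C * rexp (-k * y) := by fun_prop
  have hprimitive : ∫ y in (0 : ℝ)..b, C * rexp (-k * y) = C / k * (1 - rexp (-k * b)) := by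
    rw [intervalIntegral.integral_const_mul,
      intervalIntegral.integral_comp_mul_left _ (neg_ne_zero.2 hk.ne'), integral_exp]
    simp only [mul_zero, exp_zero, smul_eq_mul]
    field_simp
    ring
  calc ‖∫ y in (0 : ℝ)..b, g y‖ ≤ ∫ y in (0 : ℝ)..b, C * rexp (-k * y) :=
        norm_integral_le_of_norm_le hb (ae_of_all _ hg) (hcont.intervalIntegrable _ _)
    _ = C / k * (1 - rexp (-k * b)) := hprimitive
    _ ≤ C / k := mul_le_of_le_one_right (by positivity) (by linarith [exp_pos (-k * b)])

lemma integral_cexp_neg_sq_mul_sq {v : ℂ} (hv : 0 < v.re) (hv_sq : 0 < (v ^ 2).re) :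
    ∫ x : ℝ, Complex.exp (-v ^ 2 * x ^ 2) = √π / v := by
  have hv0 : v ≠ 0 := fun h => by simp [h] at hv
  have hroot_re : 0 < (√π / v : ℂ).re := by
    rw [div_eq_mul_inv, Complex.re_ofReal_mul, Complex.inv_re]
    have := Complex.normSq_pos.2 hv0
    positivity
  have hroot_sq : (π : ℂ) / v ^ 2 = (√π / v : ℂ) ^ 2 := by
    rw [div_pow, ← Complex.ofReal_pow, sq_sqrt pi_pos.le]
  rw [integral_gaussian_complex hv_sq, hroot_sq, one_div, Complex.sq_cpow_two_inv hroot_re]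

lemma cexp_I_mul_pi_div_four_sq : Complex.exp (I * π / 4) ^ 2 = I := by
  rw [← Complex.exp_nat_mul]
  convert Complex.exp_pi_div_two_mul_I using 2
  push_cast
  ring

lemma inv_cexp_I_mul_pi_div_four :
    (Complex.exp (I * π / 4))⁻¹ = (√2 / 2 : ℝ) * (1 - I) := by
  rw [← Complex.exp_neg, show -(I * (π : ℂ) / 4) = (-(π / 4) : ℝ) * I by push_cast; ring,
    Complex.exp_mul_I, ← Complex.ofReal_cos, ← Complex.ofReal_sin, cos_neg, sin_neg,
    cos_pi_div_four, sin_pi_div_four]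
  push_cast
  ring

lemma integral_mul_cexp_I_mul_sq {c : ℝ} (hc : 0 < c) {w : ℂ} (hre : 0 < w.re) (him : 0 < w.im) :
    ∫ x : ℝ, w * Complex.exp (I * (c * w ^ 2 * x ^ 2)) =
      √(π / c) * Complex.exp (I * π / 4) := by
  set u := Complex.exp (I * π / 4)
  set v := √c * (w * u⁻¹) with hv
  have hw0 : w ≠ 0 := fun h => by simp [h] at hre
  have hu0 : u ≠ 0 := Complex.exp_ne_zero _
  have hv_re : v.re = √c * (√2 / 2 * (w.re + w.im)) := by
    rw [hv, inv_cexp_I_mul_pi_div_four, mul_left_comm w, Complex.re_ofReal_mul,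
      Complex.re_ofReal_mul]
    simp
  have hv_sq : -v ^ 2 = I * (c * w ^ 2) := by
    rw [hv, mul_pow, mul_pow, inv_pow, cexp_I_mul_pi_div_four_sq, ← Complex.ofReal_pow,
      sq_sqrt hc.le, Complex.inv_I]
    ring
  have hv_sq_re : (v ^ 2).re = 2 * (c * (w.re * w.im)) := by
    rw [← neg_neg (v ^ 2), hv_sq]
    simp only [sq, Complex.neg_re, Complex.mul_re, Complex.I_re, Complex.ofReal_re,
      Complex.ofReal_im, Complex.mul_im, zero_mul, sub_zero, Complex.I_im, add_zero, one_mul,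
      zero_sub, neg_neg]
    ring
  calc ∫ x : ℝ, w * Complex.exp (I * (c * w ^ 2 * x ^ 2))
      = w * ∫ x : ℝ, Complex.exp (-v ^ 2 * x ^ 2) := by
        rw [MeasureTheory.integral_const_mul, hv_sq]
        simp only [mul_assoc]
    _ = w * (√π / v) := by
        rw [integral_cexp_neg_sq_mul_sq (by rw [hv_re]; positivity) (by rw [hv_sq_re]; positivity)]
    _ = √(π / c) * u := by
        have : (√c : ℂ) ≠ 0 := mod_cast (sqrt_pos.2 hc).ne'
        rw [hv, sqrt_div' _ hc.le]
        push_cast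
        field_simp

/-- The direction of the line through the saddle point onto which the real line is deformed. With
`1 + i`, the direction of steepest descent, the cubic term of the phase would destroy the decay on
one side; with `2 + i` the modulus of the integrand decays on both sides. -/
noncomputable def contourDir : ℂ := 2 + I

@[simp] lemma contourDir_re : contourDir.re = 2 := by simp [contourDir]

@[simp] lemma contourDir_im : contourDir.im = 1 := by simp [contourDir]

lemma norm_contourDir_le : ‖contourDir‖ ≤ 3 :=
  (norm_add_le _ _).trans (by norm_num)

/-- The integrand `f(z) e^{-iξz}` extended to complex `z`, with frequency `ξ = l³`, so that `z = l`
is the real saddle point of its phase `z⁴/4 - ξz`. -/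
noncomputable def quarticIntegrand (l : ℝ) (z : ℂ) : ℂ :=
  z * Complex.exp (I * (z ^ 4 / 4 - (l : ℂ) ^ 3 * z))

lemma quarticIntegrand_neg_neg (l : ℝ) (z : ℂ) :
    quarticIntegrand (-l) (-z) = -quarticIntegrand l z := by
  simp only [quarticIntegrand]
  push_cast
  ring_nf

lemma differentiable_quarticIntegrand (l : ℝ) : Differentiable ℂ (quarticIntegrand l) := by
  unfold quarticIntegrand
  fun_prop

lemma norm_quarticIntegrand (l : ℝ) (z : ℂ) :
    ‖quarticIntegrand l z‖ =
      ‖z‖ * rexp (-((z.re ^ 3 - z.re * z.im ^ 2 - l ^ 3) * z.im)) := by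
  rw [quarticIntegrand, norm_mul, Complex.norm_exp]
  congr 2
  simp only [pow_succ, pow_zero, one_mul, Complex.mul_re, Complex.mul_im, Complex.sub_re,
    Complex.sub_im, Complex.div_ofNat_re, Complex.div_ofNat_im, Complex.ofReal_re,
    Complex.ofReal_im, Complex.I_re, Complex.I_im]
  ring

lemma norm_quarticIntegrand_vertical_le {l x y : ℝ} (hx : 2 * |l| ≤ x) (hy : y ∈ Set.Ioc 0 x) :
    ‖quarticIntegrand l ((l + 2 * x : ℝ) + y * I)‖ ≤ 4 * x * rexp (-x ^ 3 * y) := by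
  obtain ⟨hl_lower, hl_upper⟩ := abs_le.1 (show |l| ≤ x / 2 by linarith)
  obtain ⟨hy0, hyx⟩ := hy
  rw [norm_quarticIntegrand]
  simp only [Complex.add_re, Complex.add_im, Complex.ofReal_re, Complex.ofReal_im,
    Complex.re_ofReal_mul, Complex.im_ofReal_mul, Complex.I_re, Complex.I_im, mul_zero, mul_one,
    add_zero, zero_add]
  have hmodulus : ‖((l + 2 * x : ℝ) + y * I : ℂ)‖ ≤ 4 * x := by
    refine (norm_add_le _ _).trans ?_
    rw [norm_mul, Complex.norm_I, mul_one, Complex.norm_of_nonneg (by linarith),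
      Complex.norm_of_nonneg hy0.le]
    linarith
  have hl_cube : l ^ 3 ≤ (x / 2) ^ 3 := (Odd.strictMono_pow (by decide)).monotone hl_upper
  have hphase : x ^ 3 ≤ (l + 2 * x) ^ 3 - (l + 2 * x) * y ^ 2 - l ^ 3 := by
    have hgap : 5 / 4 * x ^ 2 ≤ (l + 2 * x) ^ 2 - y ^ 2 := by nlinarith
    have hproduct : 3 / 2 * x * (5 / 4 * x ^ 2) ≤ (l + 2 * x) * ((l + 2 * x) ^ 2 - y ^ 2) := by
      gcongr <;> linarith
    nlinarith [pow_pos (hy0.trans_le hyx) 3]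
  rw [neg_mul]
  gcongr
  linarith

/-- The integral of `quarticIntegrand l` over the vertical segment joining the real axis to the
line through `l` of direction `contourDir`. -/
noncomputable def verticalIntegral (l x : ℝ) : ℂ :=
  ∫ y in (0 : ℝ)..(contourDir.im * x), quarticIntegrand l ((l + contourDir.re * x : ℝ) + y * I)

lemma verticalIntegral_neg_neg (l x : ℝ) :
    verticalIntegral (-l) (-x) = verticalIntegral l x := by
  have hneg (y : ℝ) : quarticIntegrand (-l) ((-l + 2 * -x : ℝ) + (-y : ℝ) * I) =
      -quarticIntegrand l ((l + 2 * x : ℝ) + y * I) := by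
    rw [← quarticIntegrand_neg_neg]
    push_cast
    ring_nf
  simp only [verticalIntegral, contourDir_re, contourDir_im, one_mul]
  rw [integral_symm, ← neg_zero, ← intervalIntegral.integral_comp_neg]
  simp only [hneg, neg_zero, intervalIntegral.integral_neg, neg_neg]

lemma tendsto_verticalIntegral_atTop (l : ℝ) : Tendsto (verticalIntegral l) atTop (𝓝 0) := by
  have hbound : Tendsto (fun x : ℝ => 4 / x ^ 2) atTop (𝓝 0) :=
    tendsto_const_nhds.div_atTop (tendsto_pow_atTop two_ne_zero)
  refine squeeze_zero_norm' ?_ hbound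
  filter_upwards [eventually_ge_atTop (2 * |l|), eventually_gt_atTop 0] with x hlx hx
  simp only [verticalIntegral, contourDir_re, contourDir_im, one_mul]
  calc _ ≤ 4 * x / x ^ 3 :=
        norm_integral_le_div_of_norm_le_mul_exp (by positivity) (by positivity) hx.le
          fun _ hy => norm_quarticIntegrand_vertical_le hlx hy
    _ = 4 / x ^ 2 := by field_simp

lemma tendsto_verticalIntegral_cobounded (l : ℝ) :
    Tendsto (verticalIntegral l) (cobounded ℝ) (𝓝 0) := by
  rw [IsOrderBornology.cobounded_eq, tendsto_sup]
  refine ⟨?_, tendsto_verticalIntegral_atTop l⟩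
  refine ((tendsto_verticalIntegral_atTop (-l)).comp tendsto_neg_atBot_atTop).congr fun x => ?_
  exact verticalIntegral_neg_neg l x

/-- With `(p, q) = (l, 1)` this is, up to the phase `e^{-3il⁴/4}`, the integrand of `h(l³)` along
the line through `l` of direction `contourDir`; rescaling `x` by `l` turns it into
`(p, q) = (1, l⁻²)`, and `(1, 0)` is the limiting Gaussian. -/
noncomputable def saddleIntegrand (p q x : ℝ) : ℂ :=
  contourDir * (p + q * (contourDir * x)) *
    Complex.exp (I * (3 / 2 * p ^ 2 * contourDir ^ 2 * x ^ 2 + p * q * contourDir ^ 3 * x ^ 3 +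
      q ^ 2 * contourDir ^ 4 * x ^ 4 / 4))

lemma continuous_saddleIntegrand (p q : ℝ) : Continuous (saddleIntegrand p q) := by
  unfold saddleIntegrand
  fun_prop

lemma continuous_saddleIntegrand_right (p x : ℝ) :
    Continuous fun q : ℝ => saddleIntegrand p q x := by
  unfold saddleIntegrand
  fun_prop

lemma norm_saddleIntegrand_le (p q x : ℝ) :
    ‖saddleIntegrand p q x‖ ≤
      3 * (|p| + 3 * |q| * |x|) * rexp (-(p ^ 2 * x ^ 2 + q ^ 2 * x ^ 4) / 2) := by
  have hamplitude : ‖(p + q * (contourDir * x) : ℂ)‖ ≤ |p| + 3 * |q| * |x| := by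
    refine (norm_add_le _ _).trans ?_
    rw [norm_mul, norm_mul, Complex.norm_real, Complex.norm_real, Complex.norm_real,
      mul_comm 3, mul_assoc]
    simp only [Real.norm_eq_abs]
    gcongr
    exact norm_contourDir_le
  have hphase : (I * (3 / 2 * p ^ 2 * contourDir ^ 2 * x ^ 2 + p * q * contourDir ^ 3 * x ^ 3 +
      q ^ 2 * contourDir ^ 4 * x ^ 4 / 4) : ℂ).re =
      -(6 * p ^ 2 * x ^ 2 + 11 * p * q * x ^ 3 + 6 * q ^ 2 * x ^ 4) := by
    simp only [pow_succ, pow_zero, one_mul, Complex.mul_re, Complex.I_re, Complex.add_re,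
      Complex.div_ofNat_re, Complex.re_ofNat, Complex.ofReal_re, Complex.ofReal_im, mul_zero,
      sub_zero, Complex.div_ofNat_im, Complex.im_ofNat, zero_div, Complex.mul_im, zero_mul,
      add_zero, contourDir_re, contourDir_im, mul_one, Complex.I_im, Complex.add_im, zero_add,
      zero_sub]
    ring
  rw [saddleIntegrand, norm_mul, norm_mul, Complex.norm_exp, hphase]
  gcongr
  · exact norm_contourDir_le
  · nlinarith [sq_nonneg (p * x + q * x ^ 2)]

lemma integrable_add_mul_abs_mul_exp_neg_mul_sq {b : ℝ} (hb : 0 < b) (c d : ℝ) :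
    Integrable fun x : ℝ => (c + d * |x|) * rexp (-b * x ^ 2) := by
  refine (((integrable_exp_neg_mul_sq hb).const_mul c).add
    ((integrable_mul_exp_neg_mul_sq hb).abs.const_mul d)).congr (ae_of_all _ fun x => ?_)
  simp only [Pi.add_apply, abs_mul, abs_exp]
  ring

lemma integrable_saddleIntegrand (p : ℝ) {q : ℝ} (hq : q ≠ 0) :
    Integrable (saddleIntegrand p q) := by
  refine ((integrable_add_mul_abs_mul_exp_neg_mul_sq one_pos |p| (3 * |q|)).const_mul
    (3 * rexp ((q ^ 2)⁻¹ / 2))).mono' (continuous_saddleIntegrand p q).aestronglyMeasurable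
    (ae_of_all _ fun x => ?_)
  have hexponent : -(p ^ 2 * x ^ 2 + q ^ 2 * x ^ 4) / 2 ≤ (q ^ 2)⁻¹ / 2 + -1 * x ^ 2 := by
    have hsquare : q ^ 2 * x ^ 4 - 2 * x ^ 2 + (q ^ 2)⁻¹ = (q * x ^ 2 - q⁻¹) ^ 2 := by
      field_simp
      ring
    nlinarith [sq_nonneg (p * x), sq_nonneg (q * x ^ 2 - q⁻¹)]
  calc ‖saddleIntegrand p q x‖
      ≤ 3 * (|p| + 3 * |q| * |x|) * rexp ((q ^ 2)⁻¹ / 2 + -1 * x ^ 2) :=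
        (norm_saddleIntegrand_le p q x).trans (by gcongr)
    _ = _ := by rw [exp_add]; ring

lemma tendsto_integral_saddleIntegrand_one :
    Tendsto (fun q : ℝ => ∫ x, saddleIntegrand 1 q x) (𝓝 0)
      (𝓝 (√(2 * π / 3) * Complex.exp (I * π / 4))) := by
  have hgauss : ∫ x, saddleIntegrand 1 0 x = √(2 * π / 3) * Complex.exp (I * π / 4) := by
    have hfresnel := integral_mul_cexp_I_mul_sq (c := 3 / 2) (by norm_num)
      (w := contourDir) (by simp) (by simp)
    rw [show 2 * π / 3 = π / (3 / 2) by ring, ← hfresnel]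
    simp [saddleIntegrand]
  rw [← hgauss]
  refine tendsto_integral_filter_of_dominated_convergence
    (fun x => 3 * ((1 + 3 * |x|) * rexp (-(1 / 2) * x ^ 2)))
    (.of_forall fun q => (continuous_saddleIntegrand 1 q).aestronglyMeasurable) ?_
    ((integrable_add_mul_abs_mul_exp_neg_mul_sq (by norm_num) 1 3).const_mul 3)
    (ae_of_all _ fun x => (continuous_saddleIntegrand_right 1 x).tendsto 0)
  filter_upwards [Metric.ball_mem_nhds (0 : ℝ) one_pos] with q hq
  have hq1 : |q| ≤ 1 := by simpa using (mem_ball_zero_iff.1 hq).le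
  refine ae_of_all _ fun x => (norm_saddleIntegrand_le 1 q x).trans ?_
  rw [← mul_assoc]
  gcongr
  · simp
  · linarith
  · nlinarith [sq_nonneg (q * x ^ 2)]

lemma integral_saddleIntegrand_one_right {l : ℝ} (hl : l ≠ 0) :
    ∫ x, saddleIntegrand l 1 x = l.sign * ∫ x, saddleIntegrand 1 (l ^ 2)⁻¹ x := by
  have hl' : (l : ℂ) ≠ 0 := mod_cast hl
  have hscale (x : ℝ) : saddleIntegrand l 1 x = l * saddleIntegrand 1 (l ^ 2)⁻¹ (l * x) := by
    simp only [saddleIntegrand]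
    push_cast
    field_simp
  have hsign : l * |l⁻¹| = l.sign := by
    rcases hl.lt_or_gt with hneg | hpos
    · rw [sign_of_neg hneg, abs_of_neg (inv_lt_zero.2 hneg), mul_neg, mul_inv_cancel₀ hl]
    · rw [sign_of_pos hpos, abs_of_pos (inv_pos.2 hpos), mul_inv_cancel₀ hl]
  simp only [hscale]
  rw [MeasureTheory.integral_const_mul, Measure.integral_comp_mul_left, Complex.real_smul,
    ← mul_assoc, ← Complex.ofReal_mul, hsign]

lemma contourDir_smul_quarticIntegrand_line (l x : ℝ) :
    contourDir • quarticIntegrand l (l + contourDir * x) =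
      Complex.exp (-(3 * I / 4) * (l ^ 4 : ℝ)) * saddleIntegrand l 1 x := by
  have hphase : I * ((l + contourDir * x) ^ 4 / 4 - (l : ℂ) ^ 3 * (l + contourDir * x)) =
      -(3 * I / 4) * (l ^ 4 : ℝ) + I * (3 / 2 * l ^ 2 * contourDir ^ 2 * x ^ 2 +
        l * (1 : ℝ) * contourDir ^ 3 * x ^ 3 + (1 : ℝ) ^ 2 * contourDir ^ 4 * x ^ 4 / 4) := by
    push_cast
    ring
  rw [quarticIntegrand, hphase, Complex.exp_add, saddleIntegrand, smul_eq_mul]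
  push_cast
  ring

lemma hasImproperIntegral_quarticIntegrand (l : ℝ) :
    HasImproperIntegral_s10 (fun t : ℝ => quarticIntegrand l t)
      (Complex.exp (-(3 * I / 4) * (l ^ 4 : ℝ)) * ∫ x, saddleIntegrand l 1 x) := by
  rw [← MeasureTheory.integral_const_mul]
  simp only [← contourDir_smul_quarticIntegrand_line]
  refine hasImproperIntegral_ofReal_of_line (differentiable_quarticIntegrand l) l (by simp) ?_
    (tendsto_verticalIntegral_cobounded l)
  simp only [contourDir_smul_quarticIntegrand_line]
  exact (integrable_saddleIntegrand l one_ne_zero).const_mul _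

/-- The real cube root, of either sign. -/
noncomputable def cubeRoot (ξ : ℝ) : ℝ := ξ.sign * |ξ| ^ (3⁻¹ : ℝ)

lemma cubeRoot_pow_three (ξ : ℝ) : cubeRoot ξ ^ 3 = ξ := by
  have hroot : (|ξ| ^ (3⁻¹ : ℝ)) ^ 3 = |ξ| :=
    rpow_inv_natCast_pow (abs_nonneg ξ) three_ne_zero
  rw [cubeRoot, mul_pow, hroot]
  rcases lt_trichotomy ξ 0 with hneg | rfl | hpos
  · rw [sign_of_neg hneg, abs_of_neg hneg]; ring
  · simp
  · rw [sign_of_pos hpos, abs_of_pos hpos]; ring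

lemma abs_cubeRoot (ξ : ℝ) : |cubeRoot ξ| = |ξ| ^ (3⁻¹ : ℝ) := by
  conv_rhs => rw [← cubeRoot_pow_three ξ, abs_pow]
  exact (pow_rpow_inv_natCast (abs_nonneg _) three_ne_zero).symm

lemma cubeRoot_pow_four (ξ : ℝ) : cubeRoot ξ ^ 4 = |ξ| ^ (4 / 3 : ℝ) := by
  rw [← Even.pow_abs (by decide), abs_cubeRoot, ← rpow_mul_natCast (abs_nonneg ξ)]
  norm_num

lemma cubeRoot_ne_zero {ξ : ℝ} (hξ : ξ ≠ 0) : cubeRoot ξ ≠ 0 := fun h =>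
  hξ (by rw [← cubeRoot_pow_three ξ, h, zero_pow three_ne_zero])

lemma sign_cubeRoot (ξ : ℝ) : (cubeRoot ξ).sign = ξ.sign := by
  rcases lt_trichotomy ξ 0 with hneg | rfl | hpos
  · rw [sign_of_neg hneg]
    exact sign_of_neg ((Odd.pow_neg_iff (by decide)).1 ((cubeRoot_pow_three ξ).trans_lt hneg))
  · simp [cubeRoot]
  · rw [sign_of_pos hpos]
    exact sign_of_pos ((Odd.pow_pos_iff (by decide)).1 (hpos.trans_eq (cubeRoot_pow_three ξ).symm))

lemma tendsto_inv_cubeRoot_sq_cobounded :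
    Tendsto (fun ξ => (cubeRoot ξ ^ 2)⁻¹) (cobounded ℝ) (𝓝 0) := by
  refine tendsto_inv_atTop_zero.comp ?_
  simp only [← sq_abs (cubeRoot _), abs_cubeRoot]
  exact (tendsto_pow_atTop two_ne_zero).comp
    ((tendsto_rpow_atTop (by norm_num)).comp tendsto_norm_cobounded_atTop)

/-- The function `h`, as the phase at the saddle point times a rapidly convergent integral over the
deformed contour. -/
noncomputable def quarticFourier (ξ : ℝ) : ℂ :=
  Complex.exp (-(3 * I / 4) * ((|ξ| ^ ((4 : ℝ) / 3) : ℝ) : ℂ)) *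
    ∫ x, saddleIntegrand (cubeRoot ξ) 1 x

lemma hasImproperIntegral_quarticFourier (ξ : ℝ) :
    HasImproperIntegral_s10
      (fun t : ℝ => t * Complex.exp (I * t ^ 4 / 4) * Complex.exp (-I * ξ * t))
      (quarticFourier ξ) := by
  have hintegrand (t : ℝ) : (t : ℂ) * Complex.exp (I * t ^ 4 / 4) * Complex.exp (-I * ξ * t) =
      quarticIntegrand (cubeRoot ξ) t := by
    rw [quarticIntegrand, ← Complex.ofReal_pow (cubeRoot ξ), cubeRoot_pow_three, mul_assoc,
      ← Complex.exp_add]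
    ring_nf
  simp only [hintegrand, quarticFourier, ← cubeRoot_pow_four]
  exact hasImproperIntegral_quarticIntegrand (cubeRoot ξ)

lemma quarticFourier_eq_sign_mul {ξ : ℝ} (hξ : ξ ≠ 0) :
    quarticFourier ξ = ξ.sign * Complex.exp (-(3 * I / 4) * ((|ξ| ^ ((4 : ℝ) / 3) : ℝ) : ℂ)) *
      ∫ x, saddleIntegrand 1 (cubeRoot ξ ^ 2)⁻¹ x := by
  rw [quarticFourier, integral_saddleIntegrand_one_right (cubeRoot_ne_zero hξ), sign_cubeRoot]
  ring

lemma norm_sign_mul_cexp {ξ : ℝ} (hξ : ξ ≠ 0) (s : ℝ) :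
    ‖(ξ.sign * Complex.exp (-(3 * I / 4) * s) : ℂ)‖ = 1 := by
  rw [norm_mul, Complex.norm_exp]
  rcases sign_apply_eq_of_ne_zero ξ hξ with h | h <;> simp [h]

lemma tendsto_quarticFourier_sub_cobounded :
    Tendsto (fun ξ : ℝ => quarticFourier ξ - ξ.sign * √(2 * π / 3) * Complex.exp (I * π / 4) *
      Complex.exp (-(3 * I / 4) * ((|ξ| ^ ((4 : ℝ) / 3) : ℝ) : ℂ))) (cobounded ℝ) (𝓝 0) := by
  have hsaddle := tendsto_integral_saddleIntegrand_one.comp tendsto_inv_cubeRoot_sq_cobounded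
  rw [tendsto_zero_iff_norm_tendsto_zero]
  refine (tendsto_iff_norm_sub_tendsto_zero.1 hsaddle).congr' ?_
  filter_upwards [eventually_ne_cobounded 0] with ξ hξ
  have hfactor (σ E Φ a b : ℂ) : σ * E * Φ - σ * a * b * E = σ * E * (Φ - a * b) := by ring
  rw [quarticFourier_eq_sign_mul hξ, hfactor, norm_mul, norm_sign_mul_cexp hξ, one_mul,
    Function.comp_apply]

lemma tendsto_norm_quarticFourier_cobounded :
    Tendsto (fun ξ : ℝ => ‖quarticFourier ξ‖) (cobounded ℝ) (𝓝 √(2 * π / 3)) := by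
  have hsaddle :=
    (tendsto_integral_saddleIntegrand_one.comp tendsto_inv_cubeRoot_sq_cobounded).norm
  have hlimit : ‖(√(2 * π / 3) * Complex.exp (I * π / 4) : ℂ)‖ = √(2 * π / 3) := by
    rw [norm_mul, Complex.norm_exp, Complex.norm_of_nonneg (sqrt_nonneg _)]
    simp
  rw [hlimit] at hsaddle
  refine hsaddle.congr' ?_
  filter_upwards [eventually_ne_cobounded 0] with ξ hξ
  rw [quarticFourier_eq_sign_mul hξ, norm_mul, norm_sign_mul_cexp hξ, one_mul, Function.comp_apply]

lemma not_tendsto_quarticFourier_zero {F : Filter ℝ} [F.NeBot] (hF : F ≤ cobounded ℝ) :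
    ¬ Tendsto quarticFourier F (𝓝 0) := fun hzero => by
  have hnorm := tendsto_nhds_unique (tendsto_norm_quarticFourier_cobounded.mono_left hF) hzero.norm
  have hpos : 0 < √(2 * π / 3) := by positivity
  exact hpos.ne' (hnorm.trans norm_zero)

end

/-- For `f(t) = t e^{it⁴/4}` the improper integral
`h(ξ) = ∫_ℝ f(t) e^{-iξt} dt` converges for all `ξ`, and
`h(ξ) - σ √(2π/3) e^{iπ/4} e^{-(3i/4)|ξ|^{4/3}} → 0` as `ξ → σ∞` for each sign `σ`.
In particular `|h(ξ)| → √(2π/3)` as `|ξ| → ∞`, so `h` does not tend to `0` at `±∞`. -/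
theorem stmt_10 (f : ℝ → ℂ)
    (hf : ∀ t : ℝ, f t = (t : ℂ) * Complex.exp (Complex.I * (t : ℂ) ^ 4 / 4)) :
    ∃ h : ℝ → ℂ,
      (∀ ξ : ℝ, ∃ L₁ L₂ : ℂ,
        Tendsto (fun R : ℝ => ∫ t in (0 : ℝ)..R,
            f t * Complex.exp (-Complex.I * (ξ : ℂ) * (t : ℂ))) atTop (nhds L₁) ∧
        Tendsto (fun R : ℝ => ∫ t in (-R)..(0 : ℝ),
            f t * Complex.exp (-Complex.I * (ξ : ℂ) * (t : ℂ))) atTop (nhds L₂) ∧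
        h ξ = L₁ + L₂) ∧
      Tendsto (fun ξ : ℝ => h ξ - (Real.sqrt (2 * π / 3) : ℂ) *
          Complex.exp (Complex.I * (π : ℂ) / 4) *
          Complex.exp (-(3 * Complex.I / 4) * ((|ξ| ^ ((4 : ℝ) / 3) : ℝ) : ℂ)))
        atTop (nhds 0) ∧
      Tendsto (fun ξ : ℝ => h ξ - (-1 : ℂ) * (Real.sqrt (2 * π / 3) : ℂ) *
          Complex.exp (Complex.I * (π : ℂ) / 4) *
          Complex.exp (-(3 * Complex.I / 4) * ((|ξ| ^ ((4 : ℝ) / 3) : ℝ) : ℂ)))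
        atBot (nhds 0) ∧
      Tendsto (fun ξ : ℝ => ‖h ξ‖) atTop (nhds (Real.sqrt (2 * π / 3))) ∧
      Tendsto (fun ξ : ℝ => ‖h ξ‖) atBot (nhds (Real.sqrt (2 * π / 3))) ∧
      ¬ Tendsto h atTop (nhds 0) ∧ ¬ Tendsto h atBot (nhds 0) := by
  obtain rfl : f = fun t : ℝ => (t : ℂ) * Complex.exp (Complex.I * (t : ℂ) ^ 4 / 4) := funext hf
  have hTop : atTop ≤ Bornology.cobounded ℝ := IsOrderBornology.atTop_le_cobounded
  have hBot : atBot ≤ Bornology.cobounded ℝ := IsOrderBornology.atBot_le_cobounded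
  refine ⟨quarticFourier, hasImproperIntegral_quarticFourier, ?_, ?_,
    tendsto_norm_quarticFourier_cobounded.mono_left hTop,
    tendsto_norm_quarticFourier_cobounded.mono_left hBot,
    not_tendsto_quarticFourier_zero hTop, not_tendsto_quarticFourier_zero hBot⟩
  · refine (tendsto_quarticFourier_sub_cobounded.mono_left hTop).congr' ?_
    filter_upwards [eventually_gt_atTop 0] with ξ hξ
    simp only [sign_of_pos hξ, Complex.ofReal_one, one_mul]
  · refine (tendsto_quarticFourier_sub_cobounded.mono_left hBot).congr' ?_
    filter_upwards [eventually_lt_atBot 0] with ξ hξ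
    simp only [sign_of_neg hξ, Complex.ofReal_neg, Complex.ofReal_one]
end
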